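/- arXiv:2505.14322 — 2 statements merged into one kernel-verified Lean document; each statement's English description precedes it below -/
import Mathlib

section
/- Let J ⊆ [n] be nonempty, let A be the real adjacency matrix of the opposition graph Γ_J (vertices are the flags of type J, two flags adjacent if and only if they are opposite), and let λ_J denote the smallest eigenvalue of A. If 𝓕 is a ratio-sharp EKR-set of flags of type J, then for every flag F of type J one has (−λ_J)·𝟙_𝓕(F) + #{G ∈ 𝓕 : G is opposite to F} = −λ_J, where 𝟙_𝓕(F) = 1 if F ∈ 𝓕 and 0 otherwise; in particular, for every flag F ∉ 𝓕 exactly −λ_J members of 𝓕 are opposite to F. -/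
open scoped Classical

open Module

section Defs

variable {F V : Type} [Field F] [AddCommGroup V] [Module F V]

/-- The orthogonal complement of a subspace with respect to a bilinear form. -/
def bperp (B : V →ₗ[F] V →ₗ[F] F) (W : Submodule F V) : Submodule F V :=
  ⨅ w ∈ W, LinearMap.ker (B w)

/-- A subspace is totally isotropic for `B`. -/
def IsTotIso (B : V →ₗ[F] V →ₗ[F] F) (W : Submodule F V) : Prop :=
  ∀ u ∈ W, ∀ w ∈ W, B u w = 0

/-- `B` is an alternating form. -/
def IsAltForm (B : V →ₗ[F] V →ₗ[F] F) : Prop := ∀ v, B v v = 0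

/-- `B` is nondegenerate. -/
def NondegForm (B : V →ₗ[F] V →ₗ[F] F) : Prop := ∀ v, (∀ w, B v w = 0) → v = 0

/-- A flag of type `J` of totally isotropic subspaces: entries outside `J` are `⊥`. -/
structure SFlag (B : V →ₗ[F] V →ₗ[F] F) (J : Finset ℕ) where
  space : ℕ → Submodule F V
  isotropic : ∀ i ∈ J, IsTotIso B (space i)
  finrank_eq : ∀ i ∈ J, Module.finrank F (space i) = i
  mono : ∀ i ∈ J, ∀ j ∈ J, i ≤ j → space i ≤ space j
  eq_bot : ∀ i, i ∉ J → space i = ⊥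

/-- Two flags of type `J` are opposite. -/
def FlagOpp {B : V →ₗ[F] V →ₗ[F] F} {J : Finset ℕ} (C C' : SFlag B J) : Prop :=
  ∀ i ∈ J, bperp B (C.space i) ⊓ C'.space i = ⊥

/-- An EKR-set of flags of type `J`: no two members are opposite. -/
def IsEKRFlags {B : V →ₗ[F] V →ₗ[F] F} {J : Finset ℕ} (𝓕 : Set (SFlag B J)) : Prop :=
  ∀ C ∈ 𝓕, ∀ C' ∈ 𝓕, ¬ FlagOpp C C'

/-- Two subspaces are opposite. -/
def SpaceOpp (B : V →ₗ[F] V →ₗ[F] F) (S T : Submodule F V) : Prop :=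
  bperp B S ⊓ T = ⊥

/-- An EKR-set of totally isotropic `s`-spaces: no two members are opposite. -/
def IsEKRSpaces (B : V →ₗ[F] V →ₗ[F] F) (s : ℕ) (𝓕 : Set (Submodule F V)) : Prop :=
  (∀ S ∈ 𝓕, IsTotIso B S ∧ Module.finrank F S = s) ∧
    ∀ S ∈ 𝓕, ∀ T ∈ 𝓕, ¬ SpaceOpp B S T

/-- An `s`-space `S` is heavy with respect to a set `𝓕` of flags: every flag whose
`s`-th entry equals `S` belongs to `𝓕`. -/
def Heavy {B : V →ₗ[F] V →ₗ[F] F} {J : Finset ℕ} (𝓕 : Set (SFlag B J)) (s : ℕ)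
    (S : Submodule F V) : Prop :=
  ∀ C : SFlag B J, C.space s = S → C ∈ 𝓕

end Defs

/-- `z_k = ∏_{i=1}^k (q^i-1)/(q-1)`. -/
noncomputable def zpol (q k : ℕ) : ℝ :=
  ∏ i ∈ Finset.Icc 1 k, ((q : ℝ) ^ i - 1) / ((q : ℝ) - 1)

/-- The Gaussian binomial coefficient `[m choose k]_q` as a real number. -/
noncomputable def gaussq (q m k : ℕ) : ℝ :=
  ∏ i ∈ Finset.Icc 1 k, ((q : ℝ) ^ (m - k + i) - 1) / ((q : ℝ) ^ i - 1)

/-- `Φ_m^s` in `PS(n,1,q)`: the number of totally isotropic `s`-spaces containing a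
fixed totally isotropic `m`-space. -/
noncomputable def PhiP (q n m s : ℕ) : ℝ :=
  gaussq q (n - m) (s - m) * ∏ i ∈ Finset.Icc 1 (s - m), ((q : ℝ) ^ (n - m + 1 - i) + 1)

open scoped Classical
open Module


section Perp

variable {F V : Type} [Field F] [AddCommGroup V] [Module F V]

theorem mem_bperp {B : V →ₗ[F] V →ₗ[F] F} {W : Submodule F V} {v : V} :
    v ∈ bperp B W ↔ ∀ w ∈ W, B w v = 0 := by
  simp [bperp, Submodule.mem_iInf]

theorem bperp_eq (B : V →ₗ[F] V →ₗ[F] F) (W : Submodule F V) :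
    bperp B W = LinearMap.BilinForm.orthogonal B W := by
  ext v
  rw [mem_bperp, LinearMap.BilinForm.mem_orthogonal_iff]

theorem alt_swap {B : V →ₗ[F] V →ₗ[F] F} (halt : IsAltForm B) (u v : V) : B u v = - B v u := by
  have h := halt (u + v)
  simp only [map_add, LinearMap.add_apply, halt u, halt v] at h
  simp only [zero_add, add_zero] at h
  exact eq_neg_of_add_eq_zero_right h

theorem alt_refl {B : V →ₗ[F] V →ₗ[F] F} (halt : IsAltForm B) :
    LinearMap.BilinForm.IsRefl B := by
  intro u v h
  rw [alt_swap halt, h, neg_zero]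

theorem nondeg_form {B : V →ₗ[F] V →ₗ[F] F} (halt : IsAltForm B) (hnd : NondegForm B) :
    LinearMap.BilinForm.Nondegenerate B := by
  refine ⟨fun v hv => hnd v hv, fun v hv => hnd v fun w => ?_⟩
  rw [alt_swap halt, hv, neg_zero]

theorem le_bperp_comm {B : V →ₗ[F] V →ₗ[F] F} (halt : IsAltForm B) {X Y : Submodule F V} :
    X ≤ bperp B Y ↔ Y ≤ bperp B X := by
  constructor
  · intro h y hy
    rw [mem_bperp]
    intro x hx
    rw [alt_swap halt, mem_bperp.1 (h hx) y hy, neg_zero]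
  · intro h y hy
    rw [mem_bperp]
    intro x hx
    rw [alt_swap halt, mem_bperp.1 (h hx) y hy, neg_zero]

theorem bperp_anti (B : V →ₗ[F] V →ₗ[F] F) {X Y : Submodule F V} (h : X ≤ Y) :
    bperp B Y ≤ bperp B X := by
  intro v hv
  rw [mem_bperp] at *
  exact fun w hw => hv w (h hw)

theorem isTotIso_iff {B : V →ₗ[F] V →ₗ[F] F} {X : Submodule F V} :
    IsTotIso B X ↔ X ≤ bperp B X := by
  constructor
  · intro h x hx
    rw [mem_bperp]
    exact fun w hw => h w hw x hx
  · intro h u hu w hw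
    exact mem_bperp.1 (h hw) u hu

theorem bperp_sup {B : V →ₗ[F] V →ₗ[F] F} (halt : IsAltForm B) (X Y : Submodule F V) :
    bperp B (X ⊔ Y) = bperp B X ⊓ bperp B Y := by
  apply le_antisymm
  · exact le_inf (bperp_anti B le_sup_left) (bperp_anti B le_sup_right)
  · rw [le_bperp_comm halt]
    exact sup_le ((le_bperp_comm halt).1 inf_le_left) ((le_bperp_comm halt).1 inf_le_right)

variable [FiniteDimensional F V]

theorem bperp_bperp {B : V →ₗ[F] V →ₗ[F] F} (halt : IsAltForm B) (hnd : NondegForm B)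
    (X : Submodule F V) : bperp B (bperp B X) = X := by
  rw [bperp_eq, bperp_eq]
  exact LinearMap.BilinForm.orthogonal_orthogonal (nondeg_form halt hnd) (alt_refl halt) X

theorem bperp_inf {B : V →ₗ[F] V →ₗ[F] F} (halt : IsAltForm B) (hnd : NondegForm B)
    (X Y : Submodule F V) : bperp B (X ⊓ Y) = bperp B X ⊔ bperp B Y := by
  rw [← bperp_bperp halt hnd (bperp B X ⊔ bperp B Y), bperp_sup halt,
    bperp_bperp halt hnd, bperp_bperp halt hnd]

theorem finrank_bperp {B : V →ₗ[F] V →ₗ[F] F} (halt : IsAltForm B) (hnd : NondegForm B)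
    (X : Submodule F V) : finrank F (bperp B X) + finrank F X = finrank F V := by
  rw [bperp_eq, LinearMap.BilinForm.finrank_orthogonal (nondeg_form halt hnd)]
  have := Submodule.finrank_le X
  omega

/-- the dimension of `X^⊥ ⊓ Y` against that of `Y^⊥ ⊓ X`. -/
theorem finrank_bperp_inf {B : V →ₗ[F] V →ₗ[F] F} (halt : IsAltForm B) (hnd : NondegForm B)
    (X Y : Submodule F V) :
    finrank F (bperp B X ⊓ Y : Submodule F V) + finrank F X
      = finrank F (bperp B Y ⊓ X : Submodule F V) + finrank F Y := by
  have h1 := finrank_bperp halt hnd (bperp B X ⊓ Y)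
  rw [bperp_inf halt hnd, bperp_bperp halt hnd, sup_comm] at h1
  have h2 := Submodule.finrank_sup_add_finrank_inf_eq (bperp B Y) X
  have h3 := finrank_bperp halt hnd Y
  omega

theorem bperp_inf_symm {B : V →ₗ[F] V →ₗ[F] F} (halt : IsAltForm B) (hnd : NondegForm B)
    {X Y K : Submodule F V} (hXY : finrank F X = finrank F Y) (hKX : K ≤ X) (hKY : K ≤ bperp B Y)
    (h : bperp B X ⊓ Y ≤ K) : bperp B Y ⊓ X ≤ K := by
  have h1 := finrank_bperp_inf halt hnd X Y
  have h2 := Submodule.finrank_mono h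
  exact (Submodule.eq_of_le_of_finrank_le (le_inf hKY hKX) (by omega)).ge

theorem exists_sup_span {U p : Submodule F V} (hUp : U ≤ p)
    (hd : finrank F p = finrank F U + 1) {x : V} (hxp : x ∈ p) (hxU : x ∉ U) :
    p = U ⊔ F ∙ x := by
  symm
  have hlt : U < U ⊔ F ∙ x := by
    refine lt_of_le_of_ne le_sup_left fun h => hxU ?_
    rw [h]
    exact Submodule.mem_sup_right (Submodule.mem_span_singleton_self x)
  have := Submodule.finrank_lt_finrank_of_lt hlt
  exact Submodule.eq_of_le_of_finrank_le
    (sup_le hUp ((Submodule.span_singleton_le_iff_mem _ _).2 hxp)) (by omega)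

theorem iso_ext {B : V →ₗ[F] V →ₗ[F] F} (halt : IsAltForm B)
    {U p : Submodule F V} (hU : U ≤ bperp B U) (hUp : U ≤ p) (hpU : p ≤ bperp B U)
    (hd : finrank F p = finrank F U + 1) : p ≤ bperp B p := by
  have hne : ¬ p ≤ U := fun h => by
    have := Submodule.finrank_mono h
    omega
  obtain ⟨x, hxp, hxU⟩ := SetLike.not_le_iff_exists.1 hne
  have hp := exists_sup_span hUp hd hxp hxU
  have hx : F ∙ x ≤ bperp B (F ∙ x) := by
    rw [Submodule.span_singleton_le_iff_mem, mem_bperp]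
    intro w hw
    obtain ⟨a, rfl⟩ := Submodule.mem_span_singleton.1 hw
    simp [halt x]
  have hxU' : F ∙ x ≤ bperp B U := by
    rw [Submodule.span_singleton_le_iff_mem]
    exact hpU hxp
  rw [hp, bperp_sup halt]
  exact sup_le (le_inf hU ((le_bperp_comm halt).1 hxU')) (le_inf hxU' hx)

/-- a subspace covering `U` not contained in `H ≥ U` meets `H` in `U`. -/
theorem cover_inf {U p H : Submodule F V} (hUp : U ≤ p)
    (hd : finrank F p = finrank F U + 1) (hUH : U ≤ H) (hpH : ¬ p ≤ H) : p ⊓ H = U := by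
  have hlt : p ⊓ H < p := lt_of_le_of_ne inf_le_left fun h => hpH (inf_eq_left.1 h)
  have := Submodule.finrank_lt_finrank_of_lt hlt
  exact (Submodule.eq_of_le_of_finrank_le (le_inf hUp hUH) (by omega)).symm

end Perp

section Count

variable {F V : Type} [Field F] [Fintype F] [AddCommGroup V] [Module F V] [FiniteDimensional F V]

theorem finite_V (F V : Type) [Field F] [Fintype F] [AddCommGroup V] [Module F V]
    [FiniteDimensional F V] : Finite V := Module.finite_of_finite F

noncomputable instance fintypeSub : Fintype (Submodule F V) :=
  have : Finite V := finite_V F V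
  have : Finite (Submodule F V) := Finite.of_injective (fun p : Submodule F V => (p : Set V))
    SetLike.coe_injective
  Fintype.ofFinite _

theorem ncard_sub (p : Submodule F V) :
    (p : Set V).ncard = Fintype.card F ^ finrank F p := by
  have : Finite V := finite_V F V
  have : Fintype p := Fintype.ofFinite _
  rw [← Module.card_eq_pow_finrank (K := F) (V := p), Set.ncard_eq_toFinset_card' ,
    Set.toFinset_card]
  simp

/-- subspaces covering `U` inside `W` satisfying `Q`. -/
noncomputable def covers (U W : Submodule F V) (Q : Submodule F V → Prop) :
    Finset (Submodule F V) :=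
  Finset.univ.filter fun p => U ≤ p ∧ p ≤ W ∧ finrank F p = finrank F U + 1 ∧ Q p

theorem mem_covers {U W : Submodule F V} {Q : Submodule F V → Prop} {p : Submodule F V} :
    p ∈ covers U W Q ↔ U ≤ p ∧ p ≤ W ∧ finrank F p = finrank F U + 1 ∧ Q p := by
  simp [covers]

theorem card_covers_mul {U W : Submodule F V} (hUW : U ≤ W) (Q : Submodule F V → Prop)
    (Y : Set V) (hYW : Y ⊆ W) (hYU : ∀ y ∈ Y, y ∉ U) (hYQ : ∀ y ∈ Y, Q (U ⊔ F ∙ y))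
    (hpY : ∀ p, Q p → U ≤ p → p ≤ W → finrank F p = finrank F U + 1 →
      ∀ y ∈ p, y ∉ U → y ∈ Y) :
    Y.ncard = (covers U W Q).card *
      (Fintype.card F ^ (finrank F U + 1) - Fintype.card F ^ finrank F U) := by
  have : Finite V := finite_V F V
  have hfin : Fintype V := Fintype.ofFinite _
  rw [Set.ncard_eq_toFinset_card' Y]
  rw [Finset.card_eq_sum_card_fiberwise (f := fun y => U ⊔ F ∙ y) (t := covers U W Q)]
  · rw [Finset.sum_const_nat]
    intro p hp
    rw [mem_covers] at hp
    obtain ⟨h1, h2, h3, h4⟩ := hp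
    have : (Finset.filter (fun y => U ⊔ F ∙ y = p) Y.toFinset) = ((p : Set V) \ U).toFinset := by
      ext y
      simp only [Finset.mem_filter, Set.mem_toFinset, Set.mem_sdiff, SetLike.mem_coe]
      constructor
      · rintro ⟨hy, rfl⟩
        exact ⟨Submodule.mem_sup_right (Submodule.mem_span_singleton_self y), hYU y hy⟩
      · rintro ⟨hy, hyU⟩
        exact ⟨hpY p h4 h1 h2 h3 y hy hyU, (exists_sup_span h1 h3 hy hyU).symm⟩
    rw [this, ← Set.ncard_eq_toFinset_card', Set.ncard_sdiff (by exact h1), ncard_sub, ncard_sub, h3]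
  · intro y hy
    have hy : y ∈ Y := by simpa using hy
    simp only [Finset.mem_coe, mem_covers]
    refine ⟨le_sup_left, sup_le hUW ((Submodule.span_singleton_le_iff_mem _ _).2 (hYW hy)), ?_,
      hYQ y hy⟩
    have h0 : y ≠ 0 := fun h => hYU y hy (h ▸ U.zero_mem)
    have h1 := Submodule.finrank_sup_add_finrank_inf_eq U (F ∙ y)
    have h2 : U ⊓ F ∙ y = ⊥ := by
      rw [eq_bot_iff]
      rintro z ⟨hz1, hz2⟩
      obtain ⟨a, rfl⟩ := Submodule.mem_span_singleton.1 hz2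
      by_cases ha : a = 0
      · simp [ha]
      · exact absurd ((Submodule.smul_mem_iff _ ha).1 hz1) (hYU y hy)
    rw [h2, finrank_bot, finrank_span_singleton h0] at h1
    omega

/-- Number of covers of `U` in `W` avoiding a hyperplane. -/
theorem card_covers_one {U W H : Submodule F V} (hUH : U ≤ H) (hHW : H ≤ W) {d : ℕ}
    (hd : finrank F H = finrank F U + d) (hHd : finrank F W = finrank F H + 1) :
    (covers U W fun p => ¬ p ≤ H).card = Fintype.card F ^ d := by
  have : Finite V := finite_V F V
  have h := card_covers_mul (hUH.trans hHW) (fun p => ¬ p ≤ H) ((W : Set V) \ H)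
    Set.sdiff_subset (fun y hy h => hy.2 (hUH h))
    (fun y hy h => hy.2 (h (Submodule.mem_sup_right (Submodule.mem_span_singleton_self y))))
    (fun p hp h1 h2 h3 y hy hyU => ⟨h2 hy, fun hyH => hp ?_⟩)
  · rw [Set.ncard_sdiff (by exact hHW), ncard_sub, ncard_sub, hHd, hd] at h
    have hq : 1 < Fintype.card F := Fintype.one_lt_card
    have e1 : Fintype.card F ^ (finrank F U + 1) - Fintype.card F ^ finrank F U
      = Fintype.card F ^ finrank F U * (Fintype.card F - 1) := by
        rw [pow_succ, Nat.mul_sub, mul_one]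
    have e2 : Fintype.card F ^ (finrank F U + d + 1) - Fintype.card F ^ (finrank F U + d)
      = Fintype.card F ^ d * (Fintype.card F ^ finrank F U * (Fintype.card F - 1)) := by
        rw [pow_succ, pow_add, ← mul_assoc, Nat.mul_sub, mul_one, mul_comm (Fintype.card F ^ d)]
    rw [e1, e2] at h
    have : 0 < Fintype.card F ^ finrank F U * (Fintype.card F - 1) :=
      Nat.mul_pos (by positivity) (by omega)
    exact (Nat.eq_of_mul_eq_mul_right this h).symm
  · rw [exists_sup_span h1 h3 hy hyU]
    exact sup_le hUH ((Submodule.span_singleton_le_iff_mem _ _).2 hyH)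

/-- Number of covers of `U` in `W` avoiding two hyperplanes. -/
theorem card_covers_two {U W H H' : Submodule F V} (hUH : U ≤ H) (hHW : H ≤ W)
    (hUH' : U ≤ H') (hHW' : H' ≤ W) (hne : H ≠ H') {d : ℕ}
    (hd : finrank F H = finrank F U + (d + 1)) (hHd : finrank F W = finrank F H + 1)
    (hHd' : finrank F W = finrank F H' + 1) :
    (covers U W fun p => ¬ p ≤ H ∧ ¬ p ≤ H').card = Fintype.card F ^ d * (Fintype.card F - 1) := by
  have : Finite V := finite_V F V
  have hcap : finrank F (H ⊓ H' : Submodule F V) = finrank F U + d := by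
    have h1 := Submodule.finrank_sup_add_finrank_inf_eq H H'
    have h2 : H < H ⊔ H' := by
      refine lt_of_le_of_ne le_sup_left fun h => hne ?_
      have : H' ≤ H := by rw [h]; exact le_sup_right
      exact (Submodule.eq_of_le_of_finrank_le this (by omega)).symm
    have h3 := Submodule.finrank_lt_finrank_of_lt h2
    have h4 := Submodule.finrank_mono (sup_le hHW hHW')
    omega
  have h := card_covers_mul (hUH.trans hHW) (fun p => ¬ p ≤ H ∧ ¬ p ≤ H')
    ((W : Set V) \ (H ∪ H'))
    Set.sdiff_subset (fun y hy h => hy.2 (Or.inl (hUH h)))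
    (fun y hy => ⟨fun h => hy.2
      (Or.inl (h (Submodule.mem_sup_right (Submodule.mem_span_singleton_self y)))), fun h => hy.2
      (Or.inr (h (Submodule.mem_sup_right (Submodule.mem_span_singleton_self y))))⟩)
    (fun p hp h1 h2 h3 y hy hyU => ⟨h2 hy, fun hyH => ?_⟩)
  · have hu := Set.ncard_union_add_ncard_inter (H : Set V) (H' : Set V)
    have hi : ((H : Set V) ∩ (H' : Set V)).ncard = Fintype.card F ^ (finrank F U + d) := by
      rw [← hcap, ← ncard_sub]; rfl
    have hd2 := Set.ncard_sdiff_add_ncard_of_subset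
      (Set.union_subset (by exact hHW) (by exact hHW') : (H : Set V) ∪ H' ⊆ W)
    rw [hi, ncard_sub, ncard_sub] at hu
    rw [ncard_sub, h] at hd2
    have hd' : finrank F H' = finrank F U + (d + 1) := by omega
    have hw : finrank F W = finrank F U + (d + 2) := by omega
    rw [hd, hd'] at hu
    rw [hw] at hd2
    have hq : 1 < Fintype.card F := Fintype.one_lt_card
    obtain ⟨r, hr⟩ : ∃ r, Fintype.card F = r + 2 := ⟨Fintype.card F - 2, by omega⟩
    have e1 : Fintype.card F ^ (finrank F U + 1) - Fintype.card F ^ finrank F U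
      = Fintype.card F ^ finrank F U * (Fintype.card F - 1) := by
        rw [pow_succ, Nat.mul_sub, mul_one]
    rw [e1] at hd2
    set N := (covers U W fun p => ¬ p ≤ H ∧ ¬ p ≤ H').card
    have e3 : Fintype.card F - 1 = r + 1 := by omega
    rw [e3] at hd2 ⊢
    rw [hr] at hd2 hu ⊢
    have hpos : 0 < (r + 2) ^ finrank F U * (r + 1) := by positivity
    apply Nat.eq_of_mul_eq_mul_right hpos
    simp only [pow_add] at hu hd2
    zify at hu hd2 ⊢
    linear_combination hd2 - hu
  · rcases hyH with hyH | hyH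
    · apply hp.1
      rw [exists_sup_span h1 h3 hy hyU]
      exact sup_le hUH ((Submodule.span_singleton_le_iff_mem _ _).2 hyH)
    · apply hp.2
      rw [exists_sup_span h1 h3 hy hyU]
      exact sup_le hUH' ((Submodule.span_singleton_le_iff_mem _ _).2 hyH)

end Count


theorem SFlag.ext_space {F V : Type} [Field F] [AddCommGroup V] [Module F V]
    {B : V →ₗ[F] V →ₗ[F] F} {J : Finset ℕ} {C C' : SFlag B J} (h : ∀ i ∈ J, C.space i = C'.space i) :
    C = C' := by
  have : C.space = C'.space := by
    funext i
    by_cases hi : i ∈ J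
    · exact h i hi
    · rw [C.eq_bot i hi, C'.eq_bot i hi]
  cases C
  cases C'
  simp only at this
  subst this
  rfl

section Chambers

variable {F V : Type} [Field F] [AddCommGroup V] [Module F V]
variable {B : V →ₗ[F] V →ₗ[F] F} {n : ℕ}

theorem ch_zero (C : SFlag B (Finset.Icc 1 n)) : C.space 0 = ⊥ := C.eq_bot 0 (by simp)

theorem ch_rank (C : SFlag B (Finset.Icc 1 n)) {i : ℕ} (hi : i ≤ n) :
    finrank F (C.space i) = i := by
  rcases Nat.eq_zero_or_pos i with rfl | h
  · rw [ch_zero, finrank_bot]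
  · exact C.finrank_eq i (by simp; omega)

theorem ch_mono (C : SFlag B (Finset.Icc 1 n)) {i j : ℕ} (hij : i ≤ j) (hj : j ≤ n) :
    C.space i ≤ C.space j := by
  rcases Nat.eq_zero_or_pos i with rfl | h
  · rw [ch_zero]; exact bot_le
  · exact C.mono i (by simp; omega) j (by simp; omega) hij

theorem ch_iso (C : SFlag B (Finset.Icc 1 n)) {i : ℕ} (hi : i ≤ n) :
    C.space i ≤ bperp B (C.space i) := by
  rcases Nat.eq_zero_or_pos i with rfl | h
  · rw [ch_zero]; exact bot_le
  · exact isTotIso_iff.1 (C.isotropic i (by simp; omega))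

theorem ch_perp (halt : IsAltForm B) (C : SFlag B (Finset.Icc 1 n)) {i j : ℕ} (hi : i ≤ n)
    (hj : j ≤ n) : C.space i ≤ bperp B (C.space j) := by
  rcases le_total i j with h | h
  · exact (ch_mono C h hj).trans (ch_iso C hj)
  · exact (ch_iso C hi).trans (bperp_anti B (ch_mono C h hi))

theorem ch_ext {C C' : SFlag B (Finset.Icc 1 n)} (h : ∀ i, i ≤ n → C.space i = C'.space i) :
    C = C' := SFlag.ext_space fun i hi => h i (by simp at hi; omega)

def Agree (k : ℕ) (C C' : SFlag B (Finset.Icc 1 n)) : Prop :=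
  ∀ i, i ≤ k → C.space i = C'.space i

def RelA (k : ℕ) (C C' : SFlag B (Finset.Icc 1 n)) : Prop :=
  Agree k C C' ∧ ∀ i, k < i → i ≤ n → bperp B (C.space i) ⊓ C'.space i ≤ C.space k

def RelD (k : ℕ) (C C' : SFlag B (Finset.Icc 1 n)) : Prop :=
  Agree k C C' ∧ bperp B (C.space (k+1)) ⊓ C'.space (k+1) ≤ C.space k ∧
    ∀ i, k + 1 < i → i ≤ n →
      bperp B (C.space (k+1)) ⊓ C'.space i = bperp B (C'.space (k+1)) ⊓ C.space i

def RelT (j : ℕ) (C C' : SFlag B (Finset.Icc 1 n)) : Prop :=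
  (∀ i, i ≠ j → C.space i = C'.space i) ∧ C.space j ≠ C'.space j

theorem Agree.symm {k : ℕ} {C C' : SFlag B (Finset.Icc 1 n)} (h : Agree k C C') :
    Agree k C' C := fun i hi => (h i hi).symm

theorem RelT.symm {k : ℕ} {C C' : SFlag B (Finset.Icc 1 n)} (h : RelT k C C') :
    RelT k C' C := ⟨fun i hi => (h.1 i hi).symm, h.2.symm⟩

theorem Agree.trans {k : ℕ} {C C' C'' : SFlag B (Finset.Icc 1 n)} (h : Agree k C C')
    (h' : Agree k C' C'') :
    Agree k C C'' := fun i hi => (h i hi).trans (h' i hi)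

theorem Agree.mono {k j : ℕ} {C C' : SFlag B (Finset.Icc 1 n)} (h : Agree k C C') (hj : j ≤ k) :
    Agree j C C' := fun i hi => h i (hi.trans hj)

variable [FiniteDimensional F V] 

theorem opp_symm_aux (halt : IsAltForm B) (hnd : NondegForm B) {k i : ℕ}
    {C C' : SFlag B (Finset.Icc 1 n)} (hk : C.space k = C'.space k) (hki : k ≤ i) (hi : i ≤ n)
    (h : bperp B (C.space i) ⊓ C'.space i ≤ C.space k) :
    bperp B (C'.space i) ⊓ C.space i ≤ C'.space k := by
  rw [hk] at h
  refine bperp_inf_symm halt hnd (by rw [ch_rank C hi, ch_rank C' hi]) ?_ ?_ h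
  · rw [← hk]
    exact ch_mono C hki hi
  · exact ch_perp halt C' (hki.trans hi) hi

theorem RelA.symm (halt : IsAltForm B) (hnd : NondegForm B) {k : ℕ}
    {C C' : SFlag B (Finset.Icc 1 n)} (h : RelA k C C') : RelA k C' C :=
  ⟨h.1.symm, fun i hki hi => opp_symm_aux halt hnd (h.1 k le_rfl) hki.le hi (h.2 i hki hi)⟩

theorem RelD.symm (halt : IsAltForm B) (hnd : NondegForm B) {k : ℕ} (hk : k + 1 ≤ n)
    {C C' : SFlag B (Finset.Icc 1 n)} (h : RelD k C C') : RelD k C' C :=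
  ⟨h.1.symm, opp_symm_aux halt hnd (h.1 k le_rfl) (Nat.le_succ k) hk h.2.1,
    fun i hki hi => (h.2.2 i hki hi).symm⟩

/-- the dimensions of the projection of `C` onto `p`. -/
theorem proj_rank (halt : IsAltForm B) (hnd : NondegForm B) {k i : ℕ}
    (C : SFlag B (Finset.Icc 1 n)) {p : Submodule F V} (hp : C.space k ≤ p)
    (hpr : finrank F p = k + 1) (hpp : p ≤ bperp B (C.space k))
    (hpo : bperp B (C.space (k+1)) ⊓ p ≤ C.space k) (hki : k < i) (hi : i ≤ n) :
    finrank F (bperp B p ⊓ C.space i : Submodule F V) + 1 = i ∧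
    finrank F (p ⊔ (bperp B p ⊓ C.space i) : Submodule F V) = i := by
  have h1 := finrank_bperp_inf halt hnd (C.space i) p
  have e1 : bperp B (C.space i) ⊓ p = C.space k := by
    apply le_antisymm
    · exact (inf_le_inf_right _ (bperp_anti B (ch_mono C hki hi))).trans hpo
    · exact le_inf (ch_perp halt C (hki.le.trans hi) hi) hp
  have e2 : p ⊓ (bperp B p ⊓ C.space i) = C.space k := by
    apply le_antisymm
    · rw [← e1]
      exact le_inf ((inf_le_right.trans inf_le_right).trans (ch_iso C hi)) inf_le_left
    · exact le_inf hp (le_inf ((le_bperp_comm halt).1 hpp) (ch_mono C hki.le hi))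
  have h2 := Submodule.finrank_sup_add_finrank_inf_eq p (bperp B p ⊓ C.space i)
  rw [e1, ch_rank C hi, ch_rank C (hki.le.trans hi), hpr] at h1
  rw [e2, ch_rank C (hki.le.trans hi), hpr] at h2
  omega

theorem relD_formula (halt : IsAltForm B) (hnd : NondegForm B) {k i : ℕ} 
    {C C' : SFlag B (Finset.Icc 1 n)} (h : RelD k C C') (hki : k < i) (hi : i ≤ n) :
    C'.space i = C'.space (k+1) ⊔ (bperp B (C'.space (k+1)) ⊓ C.space i) := by
  have hk : k + 1 ≤ n := by omega
  have hr := (proj_rank halt hnd C (p := C'.space (k+1))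
    ((h.1 k le_rfl).le.trans (ch_mono C' (Nat.le_succ k) hk)) (ch_rank C' hk)
    (by rw [h.1 k le_rfl]; exact ch_perp halt C' hk (by omega)) h.2.1 hki hi).2
  symm
  apply Submodule.eq_of_le_of_finrank_le
  · refine sup_le (ch_mono C' hki hi) ?_
    rcases Nat.lt_or_ge (k+1) i with h1 | h1
    · rw [← h.2.2 i h1 hi]
      exact inf_le_right
    · obtain rfl : i = k + 1 := by omega
      have := opp_symm_aux halt hnd (h.1 k le_rfl) (Nat.le_succ k) hk h.2.1
      exact this.trans (ch_mono C' (Nat.le_succ k) hk)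
  · rw [hr, ch_rank C' hi]

theorem relD_unique (halt : IsAltForm B) (hnd : NondegForm B) {k : ℕ} (hk : k + 1 ≤ n)
    {C C' C'' : SFlag B (Finset.Icc 1 n)} (h : RelD k C C') (h' : RelD k C C'')
    (he : C'.space (k+1) = C''.space (k+1)) : C' = C'' := by
  apply ch_ext
  intro i hi
  rcases Nat.lt_or_ge k i with h1 | h1
  · rw [relD_formula halt hnd h h1 hi, relD_formula halt hnd h' h1 hi, he]
  · rw [← h.1 i h1, ← h'.1 i h1]

theorem exists_proj (halt : IsAltForm B) (hnd : NondegForm B) {k : ℕ} (hk : k + 1 ≤ n)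
    (C : SFlag B (Finset.Icc 1 n)) {p : Submodule F V} (hp : C.space k ≤ p)
    (hpr : finrank F p = k + 1) (hpp : p ≤ bperp B (C.space k))
    (hpo : bperp B (C.space (k+1)) ⊓ p ≤ C.space k) :
    ∃ C' : SFlag B (Finset.Icc 1 n), RelD k C C' ∧ C'.space (k+1) = p := by
  have hkn : k ≤ n := by omega
  have hpiso : p ≤ bperp B p := iso_ext halt (ch_iso C hkn) hp hpp (by rw [hpr, ch_rank C hkn])
  let S : ℕ → Submodule F V := fun i =>
    if i ≤ k then C.space i else if i ≤ n then p ⊔ (bperp B p ⊓ C.space i) else ⊥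
  have S1 : ∀ i, i ≤ k → S i = C.space i := fun i hi => if_pos hi
  have S2 : ∀ i, k < i → i ≤ n → S i = p ⊔ (bperp B p ⊓ C.space i) := fun i hi h => by
    simp only [S]
    rw [if_neg (by omega), if_pos h]
  have hSp : S (k+1) = p := by
    rw [S2 _ (Nat.lt_succ_self k) hk]
    have hr := (proj_rank halt hnd C hp hpr hpp hpo (Nat.lt_succ_self k) hk).2
    exact (Submodule.eq_of_le_of_finrank_le le_sup_left (by rw [hr, hpr])).symm
  refine ⟨⟨S, ?_, ?_, ?_, ?_⟩, ⟨fun i hi => (S1 i hi).symm, ?_, ?_⟩, hSp⟩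
  · intro i hi
    simp only [Finset.mem_Icc] at hi
    rw [isTotIso_iff]
    rcases Nat.lt_or_ge k i with h1 | h1
    · rw [S2 i h1 hi.2, bperp_sup halt]
      refine sup_le (le_inf hpiso ?_) (le_inf inf_le_left ?_)
      · exact (le_bperp_comm halt).1 inf_le_left
      · exact inf_le_right.trans ((ch_iso C hi.2).trans (bperp_anti B inf_le_right))
    · rw [S1 i h1]
      exact ch_iso C hi.2
  · intro i hi
    simp only [Finset.mem_Icc] at hi
    rcases Nat.lt_or_ge k i with h1 | h1
    · rw [S2 i h1 hi.2]
      exact (proj_rank halt hnd C hp hpr hpp hpo h1 hi.2).2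
    · rw [S1 i h1]
      exact ch_rank C hi.2
  · intro i hi j hj hij
    simp only [Finset.mem_Icc] at hi hj
    rcases Nat.lt_or_ge k i with h1 | h1
    · rw [S2 i h1 hi.2, S2 j (by omega) hj.2]
      exact sup_le_sup_left (inf_le_inf_left _ (ch_mono C hij hj.2)) _
    · rw [S1 i h1]
      rcases Nat.lt_or_ge k j with h2 | h2
      · rw [S2 j h2 hj.2]
        exact ((ch_mono C h1 hkn).trans hp).trans le_sup_left
      · rw [S1 j h2]
        exact ch_mono C hij hj.2
  · intro i hi
    simp only [Finset.mem_Icc, not_and, not_le] at hi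
    simp only [S]
    split_ifs with h1 h2
    · have : i = 0 := by
        by_contra h
        have := hi (by omega)
        omega
      rw [this, ch_zero]
    · have : i = 0 := by
        by_contra h
        have := hi (by omega)
        omega
      omega
    · rfl
  · change bperp B (C.space (k+1)) ⊓ S (k+1) ≤ _
    rw [hSp]
    exact hpo
  · intro i h1 hi
    change bperp B (C.space (k+1)) ⊓ S i = bperp B (S (k+1)) ⊓ C.space i
    rw [hSp, S2 i (by omega) hi]
    have hH : bperp B p ⊓ C.space i ≤ bperp B (C.space (k+1)) :=
      inf_le_right.trans (ch_perp halt C hi hk)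
    rw [sup_comm, inf_comm, sup_inf_assoc_of_le _ hH, sup_eq_left, inf_comm]
    refine hpo.trans (le_inf ((le_bperp_comm halt).1 hpp) (ch_mono C (by omega) hi))

/-- the key lattice computation. -/
theorem proj_perp (halt : IsAltForm B) (hnd : NondegForm B) {X p Z : Submodule F V}
    (hpZ : p ≤ Z) (hZ : Z ≤ bperp B Z) :
    bperp B (p ⊔ (bperp B p ⊓ X)) ⊓ Z = (bperp B X ⊓ Z) ⊔ p := by
  rw [bperp_sup halt, bperp_inf halt hnd, bperp_bperp halt hnd]
  have h1 : Z ≤ bperp B p := hZ.trans (bperp_anti B hpZ)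
  have h2 : bperp B p ⊓ (p ⊔ bperp B X) ⊓ Z = (p ⊔ bperp B X) ⊓ Z := by
    rw [inf_assoc, inf_eq_right]
    exact inf_le_right.trans h1
  rw [h2, sup_inf_assoc_of_le _ hpZ, sup_comm]

theorem opp_step (halt : IsAltForm B) (hnd : NondegForm B) {k i : ℕ} 
    {C C' C'' : SFlag B (Finset.Icc 1 n)} (h : RelD k C C') (ha : Agree (k+1) C' C'')
    (hki : k < i) (hi : i ≤ n) :
    bperp B (C'.space i) ⊓ C''.space i ≤ C'.space (k+1) ↔
      bperp B (C.space i) ⊓ C''.space i ≤ C.space k := by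
  have hk : k + 1 ≤ n := by omega
  rw [relD_formula halt hnd h hki hi, proj_perp halt hnd _ (ch_iso C'' hi)]
  · rw [sup_le_iff]
    constructor
    · rintro ⟨h1, -⟩
      refine le_trans (le_inf ?_ h1) h.2.1
      exact inf_le_left.trans (bperp_anti B (ch_mono C hki hi))
    · intro h1
      refine ⟨h1.trans ?_, le_rfl⟩
      rw [h.1 k le_rfl]
      exact ch_mono C' (Nat.le_succ k) hk
  · rw [ha (k+1) le_rfl]
    exact ch_mono C'' hki hi

theorem relA_step (halt : IsAltForm B) (hnd : NondegForm B) {k : ℕ} (hk : k + 1 ≤ n)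
    {C C' C'' : SFlag B (Finset.Icc 1 n)} (h : RelD k C C') (ha : Agree (k+1) C' C'') :
    RelA (k+1) C' C'' ↔ RelA k C C'' := by
  constructor
  · rintro ⟨-, h2⟩
    refine ⟨h.1.trans (ha.mono (Nat.le_succ k)), fun i hki hi => ?_⟩
    rw [← opp_step halt hnd h ha hki hi]
    rcases Nat.lt_or_ge (k+1) i with h1 | h1
    · exact h2 i h1 hi
    · obtain rfl : i = k + 1 := by omega
      rw [ha (k+1) le_rfl]
      exact inf_le_right
  · rintro ⟨-, h2⟩
    refine ⟨ha, fun i hki hi => ?_⟩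
    rw [opp_step halt hnd h ha (by omega) hi]
    exact h2 i (by omega) hi

/-- given `C''` with `(k+1)`-space opposite to the one of `C`, project. -/
theorem exists_mid (halt : IsAltForm B) (hnd : NondegForm B) {k : ℕ} (hk : k + 1 ≤ n)
    {C C'' : SFlag B (Finset.Icc 1 n)} (ha : Agree k C C'')
    (ho : bperp B (C.space (k+1)) ⊓ C''.space (k+1) ≤ C.space k) :
    ∃ C' : SFlag B (Finset.Icc 1 n), RelD k C C' ∧ Agree (k+1) C' C'' := by
  obtain ⟨C', h1, h2⟩ := exists_proj halt hnd hk C (p := C''.space (k+1))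
    ((ha k le_rfl).le.trans (ch_mono C'' (Nat.le_succ k) hk)) (ch_rank C'' hk)
    (by rw [ha k le_rfl]; exact ch_perp halt C'' hk (by omega)) ho
  refine ⟨C', h1, fun i hi => ?_⟩
  rcases Nat.lt_or_ge k i with h | h
  · obtain rfl : i = k + 1 := by omega
    exact h2
  · rw [← h1.1 i h, ha i h]

/-- The composite of `RelD k` and `RelD (k+1)`. -/
def RelDD (k : ℕ) (C C' : SFlag B (Finset.Icc 1 n)) : Prop :=
  Agree k C C' ∧ bperp B (C.space (k+1)) ⊓ C'.space (k+1) ≤ C.space k ∧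
    bperp B (C.space (k+2)) ⊓ C'.space (k+2) ≤ C.space k ∧
    ∀ i, k + 2 < i → i ≤ n →
      bperp B (C.space (k+2)) ⊓ C'.space i = bperp B (C'.space (k+2)) ⊓ C.space i

theorem RelDD.symm (halt : IsAltForm B) (hnd : NondegForm B) {k : ℕ} (hk : k + 2 ≤ n)
    {C C' : SFlag B (Finset.Icc 1 n)} (h : RelDD k C C') : RelDD k C' C :=
  ⟨h.1.symm, opp_symm_aux halt hnd (h.1 k le_rfl) (Nat.le_succ k) (by omega) h.2.1,
    opp_symm_aux halt hnd (h.1 k le_rfl) (by omega) (by omega) h.2.2.1,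
    fun i hki hi => (h.2.2.2 i hki hi).symm⟩

theorem relDD_step (halt : IsAltForm B) (hnd : NondegForm B) {k : ℕ} (hk : k + 2 ≤ n)
    {C C' C'' : SFlag B (Finset.Icc 1 n)} (h : RelD k C C') (ha : Agree (k+1) C' C'') :
    RelD (k+1) C' C'' ↔ RelDD k C C'' := by
  have hk1 : k + 1 ≤ n := by omega
  have hkn : k ≤ n := by omega
  have hp : C'.space (k+1) = C''.space (k+1) := ha (k+1) le_rfl
  have hkk : C.space k = C''.space k := (h.1 k le_rfl).trans (ha k (Nat.le_succ k))
  have key : ∀ i, k + 2 < i → i ≤ n →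
      (bperp B (C'.space (k+2)) ⊓ C''.space i = bperp B (C''.space (k+2)) ⊓ C'.space i ↔
      bperp B (C.space (k+2)) ⊓ C''.space i = bperp B (C''.space (k+2)) ⊓ C.space i) := by
    intro i hki hi
    have e1 : bperp B (C'.space (k+2)) ⊓ C''.space i =
        (bperp B (C.space (k+2)) ⊓ C''.space i) ⊔ C''.space (k+1) := by
      rw [relD_formula halt hnd h (by omega : k < k + 2) hk, hp]
      exact proj_perp halt hnd (ch_mono C'' (by omega) hi) (ch_iso C'' hi)
    have e2 : bperp B (C''.space (k+2)) ⊓ C'.space i =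
        (bperp B (C''.space (k+2)) ⊓ C.space i) ⊔ C''.space (k+1) := by
      rw [relD_formula halt hnd h (by omega : k < i) hi, hp, inf_comm,
        sup_inf_assoc_of_le _ (ch_perp halt C'' hk1 hk), sup_comm]
      congr 1
      apply le_antisymm
      · exact le_inf inf_le_right (inf_le_left.trans inf_le_right)
      · refine le_inf (le_inf (inf_le_left.trans ?_) inf_le_right) inf_le_left
        exact bperp_anti B (ch_mono C'' (by omega) hk)
    rw [e1, e2]
    constructor
    · intro hE
      have aux : ∀ X : Submodule F V, C.space k ≤ X → X ≤ bperp B (C.space (k+1)) →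
          (X ⊔ C''.space (k+1)) ⊓ bperp B (C.space (k+1)) = X := by
        intro X h1 h2
        rw [sup_inf_assoc_of_le _ h2, sup_eq_left, inf_comm, ← hp]
        exact h.2.1.trans h1
      rw [← aux (bperp B (C.space (k+2)) ⊓ C''.space i), hE, aux]
      · refine le_inf ?_ (ch_mono C (by omega) hi)
        rw [hkk]
        exact ch_perp halt C'' hkn hk
      · exact inf_le_right.trans (ch_perp halt C hi hk1)
      · refine le_inf (ch_perp halt C hkn hk) ?_
        rw [hkk]
        exact ch_mono C'' (by omega) hi
      · exact inf_le_left.trans (bperp_anti B (ch_mono C (by omega) hk))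
    · intro hE
      rw [hE]
  constructor
  · rintro ⟨-, h2, h3⟩
    refine ⟨h.1.trans (ha.mono (Nat.le_succ k)), ?_, ?_, fun i h1 hi => ?_⟩
    · rw [← hp]
      exact h.2.1
    · exact (opp_step halt hnd h ha (by omega) hk).1 h2
    · exact (key i h1 hi).1 (h3 i h1 hi)
  · rintro ⟨-, h1, h2, h3⟩
    refine ⟨ha, (opp_step halt hnd h ha (by omega) hk).2 h2, fun i h1 hi => ?_⟩
    exact (key i h1 hi).2 (h3 i h1 hi)

end Chambers


section Chambers2

variable {F V : Type} [Field F] [AddCommGroup V] [Module F V]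
variable {B : V →ₗ[F] V →ₗ[F] F} {n : ℕ}
variable [FiniteDimensional F V] 

theorem exists_replace {k : ℕ} (hk : k + 2 ≤ n)
    (C : SFlag B (Finset.Icc 1 n)) {r : Submodule F V} (hr : C.space k ≤ r)
    (hr2 : r ≤ C.space (k+2)) (hrr : finrank F r = k + 1) :
    ∃ C' : SFlag B (Finset.Icc 1 n), (∀ i, i ≠ k + 1 → C'.space i = C.space i) ∧
      C'.space (k+1) = r := by
  let S : ℕ → Submodule F V := fun i => if i = k + 1 then r else C.space i
  have S1 : S (k+1) = r := if_pos rfl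
  have S2 : ∀ i, i ≠ k + 1 → S i = C.space i := fun i hi => if_neg hi
  refine ⟨⟨S, ?_, ?_, ?_, ?_⟩, S2, S1⟩
  · intro i hi
    by_cases h : i = k + 1
    · subst h
      rw [S1, isTotIso_iff]
      exact hr2.trans ((ch_iso C hk).trans (bperp_anti B hr2))
    · rw [S2 i h]
      exact C.isotropic i hi
  · intro i hi
    by_cases h : i = k + 1
    · subst h
      rw [S1, hrr]
    · rw [S2 i h]
      exact C.finrank_eq i hi
  · intro i hi j hj hij
    simp only [Finset.mem_Icc] at hi hj
    by_cases h : i = k + 1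
    · subst h
      rw [S1]
      by_cases h' : j = k + 1
      · subst h'
        rw [S1]
      · rw [S2 j h']
        exact hr2.trans (ch_mono C (by omega) hj.2)
    · rw [S2 i h]
      by_cases h' : j = k + 1
      · subst h'
        rw [S1]
        exact (ch_mono C (by omega) (by omega)).trans hr
      · rw [S2 j h']
        exact ch_mono C hij hj.2
  · intro i hi
    rw [S2 i (by rintro rfl; simp at hi; omega)]
    exact C.eq_bot i hi

theorem sup_of_ne {k : ℕ} (hk : k + 2 ≤ n) (C : SFlag B (Finset.Icc 1 n)) {r : Submodule F V}
    (hr2 : r ≤ C.space (k+2)) (hrr : finrank F r = k + 1)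
    (hne : C.space (k+1) ≠ r) : C.space (k+2) = C.space (k+1) ⊔ r := by
  symm
  have h1 : C.space (k+1) < C.space (k+1) ⊔ r := by
    refine lt_of_le_of_ne le_sup_left fun h => hne ?_
    have h2 : r ≤ C.space (k+1) := by rw [h]; exact le_sup_right
    exact (Submodule.eq_of_le_of_finrank_le h2 (by rw [hrr, ch_rank C (by omega)])).symm
  have h2 := Submodule.finrank_lt_finrank_of_lt h1
  rw [ch_rank C (by omega)] at h2
  apply Submodule.eq_of_le_of_finrank_le (sup_le (ch_mono C (by omega) hk) hr2)
  rw [ch_rank C hk]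
  omega

theorem tdt_sound (halt : IsAltForm B) (hnd : NondegForm B) {k : ℕ} (hk : k + 2 ≤ n)
    {C C1 C2 C'' : SFlag B (Finset.Icc 1 n)} (h1 : RelT (k+1) C C1) (h2 : RelD (k+1) C1 C2)
    (h3 : RelT (k+1) C2 C'') :
    RelD k C C'' ∧ C2.space (k+1) = bperp B (C.space (k+1)) ⊓ C''.space (k+2) := by
  have hk1 : k + 1 ≤ n := by omega
  have hkn : k ≤ n := by omega
  have er : C1.space (k+1) = C2.space (k+1) := h2.1 (k+1) le_rfl
  have el : C.space (k+2) = C1.space (k+2) := h1.1 _ (by omega)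
  have el2 : C2.space (k+2) = C''.space (k+2) := h3.1 _ (by omega)
  have ek : C.space k = C''.space k := by
    rw [h1.1 k (by omega), h2.1 k (by omega), h3.1 k (by omega)]
  have hrl : C2.space (k+1) ≤ C.space (k+2) := by
    rw [← er, el]; exact ch_mono C1 (by omega) hk
  have hrl2 : C2.space (k+1) ≤ C''.space (k+2) := by
    rw [← el2]; exact ch_mono C2 (by omega) hk
  have hrr : finrank F (C2.space (k+1)) = k + 1 := ch_rank C2 hk1
  have hl : C.space (k+2) = C.space (k+1) ⊔ C2.space (k+1) :=
    sup_of_ne hk C hrl hrr (by rw [← er]; exact h1.2)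
  have hl2 : C''.space (k+2) = C''.space (k+1) ⊔ C2.space (k+1) :=
    sup_of_ne hk C'' hrl2 hrr h3.2.symm
  -- perp computations
  have hperp : ∀ i, k + 2 ≤ i → i ≤ n →
      bperp B (C.space (k+1)) ⊓ C''.space i = bperp B (C.space (k+2)) ⊓ C''.space i := by
    intro i hi1 hi
    rw [hl, bperp_sup halt, inf_assoc]
    congr 1
    symm
    rw [inf_eq_right]
    exact (ch_iso C'' hi).trans (bperp_anti B (hrl2.trans (ch_mono C'' hi1 hi)))
  have hperp2 : ∀ i, k + 2 ≤ i → i ≤ n →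
      bperp B (C''.space (k+1)) ⊓ C.space i = bperp B (C''.space (k+2)) ⊓ C.space i := by
    intro i hi1 hi
    rw [hl2, bperp_sup halt, inf_assoc]
    congr 1
    symm
    rw [inf_eq_right]
    exact (ch_iso C hi).trans (bperp_anti B (hrl.trans (ch_mono C hi1 hi)))
  have hopp : bperp B (C.space (k+2)) ⊓ C''.space (k+2) ≤ C2.space (k+1) := by
    rw [el, ← el2, ← er]
    exact h2.2.1
  have hE : bperp B (C.space (k+1)) ⊓ C''.space (k+2) = C2.space (k+1) := by
    rw [hperp _ le_rfl hk]
    apply le_antisymm hopp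
    exact le_inf (hrl.trans (ch_iso C hk)) hrl2
  have hno : ¬ C''.space (k+1) ≤ bperp B (C.space (k+1)) := by
    intro h
    have : C''.space (k+1) ≤ C2.space (k+1) := by
      rw [← hE]
      exact le_inf h (ch_mono C'' (by omega) hk)
    exact h3.2 (Submodule.eq_of_le_of_finrank_le this (by rw [hrr, ch_rank C'' hk1])).symm
  have hOpp : bperp B (C.space (k+1)) ⊓ C''.space (k+1) ≤ C.space k := by
    rw [inf_comm]
    apply le_of_eq
    apply cover_inf
    · rw [ek]; exact ch_mono C'' (by omega) hk1
    · rw [ch_rank C'' hk1, ch_rank C hkn]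
    · exact ch_perp halt C hkn hk1
    · exact hno
  refine ⟨⟨fun i hi => ?_, hOpp, fun i hi1 hi => ?_⟩, hE.symm⟩
  · rcases Nat.lt_or_ge i (k+1) with h | h
    · rw [h1.1 i (by omega), h2.1 i (by omega), h3.1 i (by omega)]
    · omega
  · rw [hperp i (by omega) hi, hperp2 i (by omega) hi]
    rcases Nat.lt_or_ge (k+2) i with h | h
    · have := h2.2.2 i h hi
      rw [← h3.1 i (by omega), h1.1 i (by omega), el, ← el2]
      exact this
    · obtain rfl : i = k + 2 := by omega
      rw [← hperp _ le_rfl hk, hE]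
      have h4 := finrank_bperp_inf halt hnd (C.space (k+2)) (C''.space (k+2))
      rw [← hperp _ le_rfl hk, hE, ch_rank C hk, ch_rank C'' hk, hrr] at h4
      apply Submodule.eq_of_le_of_finrank_le
      · exact le_inf (hrl2.trans (ch_iso C'' hk)) hrl
      · rw [hrr]; omega

theorem tdt_exists (halt : IsAltForm B) (hnd : NondegForm B) {k : ℕ} (hk : k + 2 ≤ n)
    {C C'' : SFlag B (Finset.Icc 1 n)} (h : RelD k C C'') :
    ∃ C1 C2 : SFlag B (Finset.Icc 1 n), RelT (k+1) C C1 ∧ RelD (k+1) C1 C2 ∧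
      RelT (k+1) C2 C'' := by
  have hk1 : k + 1 ≤ n := by omega
  have hkn : k ≤ n := by omega
  have ek : C.space k = C''.space k := h.1 k le_rfl
  have hs := h.symm halt hnd hk1
  have hE := h.2.2 (k+2) (by omega) hk
  obtain ⟨r, hr⟩ : ∃ r, r = bperp B (C.space (k+1)) ⊓ C''.space (k+2) := ⟨_, rfl⟩
  rw [← hr] at hE
  have hrr : finrank F r = k + 1 := by
    have := (proj_rank halt hnd C'' (p := C.space (k+1)) (k := k) (i := k + 2)
      (by rw [← ek]; exact ch_mono C (by omega) hk1) (ch_rank C hk1)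
      (by rw [← ek]; exact ch_perp halt C hk1 hkn) hs.2.1 (by omega) hk).1
    rw [← hr] at this
    omega
  have hrl2 : r ≤ C''.space (k+2) := by rw [hr]; exact inf_le_right
  have hrl : r ≤ C.space (k+2) := by rw [hE]; exact inf_le_right
  have hkr : C.space k ≤ r := by
    rw [hr]
    refine le_inf (ch_perp halt C hkn hk1) ?_
    rw [ek]; exact ch_mono C'' (by omega) hk
  obtain ⟨C1, hC1, hC1r⟩ := exists_replace hk C hkr hrl hrr
  obtain ⟨C2, hC2, hC2r⟩ := exists_replace hk C'' (ek ▸ hkr) hrl2 hrr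
  have hlt : ∀ {X Y : SFlag B (Finset.Icc 1 n)}, X.space k = Y.space k →
      bperp B (X.space (k+1)) ⊓ Y.space (k+1) ≤ X.space k → 
      Y.space (k+1) ≤ bperp B (X.space (k+1)) → False := by
    intro X Y hXY h1 h2
    have := Submodule.finrank_mono ((le_inf h2 le_rfl).trans h1)
    rw [ch_rank Y hk1, ch_rank X hkn] at this
    omega
  have n1 : C.space (k+1) ≠ r := by
    intro h1
    refine hlt ek.symm hs.2.1 ?_
    rw [h1, hE]
    exact inf_le_left
  have n2 : C''.space (k+1) ≠ r := by
    intro h1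
    refine hlt ek h.2.1 ?_
    rw [h1, hr]
    exact inf_le_left
  have hl : C.space (k+2) = C.space (k+1) ⊔ r := sup_of_ne hk C hrl hrr n1
  have hl2 : C''.space (k+2) = C''.space (k+1) ⊔ r := sup_of_ne hk C'' hrl2 hrr n2
  have hperp : ∀ i, k + 2 ≤ i → i ≤ n →
      bperp B (C.space (k+1)) ⊓ C''.space i = bperp B (C.space (k+2)) ⊓ C''.space i := by
    intro i hi1 hi
    rw [hl, bperp_sup halt, inf_assoc]
    congr 1
    symm
    rw [inf_eq_right]
    exact (ch_iso C'' hi).trans (bperp_anti B (hrl2.trans (ch_mono C'' hi1 hi)))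
  have hperp2 : ∀ i, k + 2 ≤ i → i ≤ n →
      bperp B (C''.space (k+1)) ⊓ C.space i = bperp B (C''.space (k+2)) ⊓ C.space i := by
    intro i hi1 hi
    rw [hl2, bperp_sup halt, inf_assoc]
    congr 1
    symm
    rw [inf_eq_right]
    exact (ch_iso C hi).trans (bperp_anti B (hrl.trans (ch_mono C hi1 hi)))
  refine ⟨C1, C2, ⟨fun i hi => (hC1 i hi).symm, by rw [hC1r]; exact n1⟩, ⟨?_, ?_, ?_⟩,
    ⟨fun i hi => hC2 i hi, by rw [hC2r]; exact n2.symm⟩⟩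
  · intro i hi
    by_cases h1 : i = k + 1
    · subst h1
      rw [hC1r, hC2r]
    · rw [hC1 i h1, hC2 i h1, h.1 i (by omega)]
  · rw [hC1r, hC1 _ (by omega), hC2 _ (by omega), ← hperp _ le_rfl hk, hr]
  · intro i hi1 hi
    rw [hC1 _ (by omega), hC2 _ (by omega), hC1 _ (by omega), hC2 _ (by omega), 
      ← hperp i (by omega) hi, ← hperp2 i (by omega) hi]
    exact h.2.2 i (by omega) hi

end Chambers2

section Mat

noncomputable def relMat {X : Type} (r : X → X → Prop) : Matrix X X ℝ :=
  Matrix.of fun a b => if r a b then 1 else 0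

theorem relMat_apply {X : Type} (r : X → X → Prop) (a b : X) :
    relMat r a b = if r a b then 1 else 0 := rfl

theorem relMat_mul {X : Type} [Fintype X] {r s t : X → X → Prop}
    (h1 : ∀ a c, t a c → ∃ b, r a b ∧ s b c) (h2 : ∀ a b c, r a b → s b c → t a c)
    (h3 : ∀ a b b' c, r a b → s b c → r a b' → s b' c → b = b') :
    relMat r * relMat s = relMat t := by
  ext a c
  rw [Matrix.mul_apply]
  simp only [relMat_apply]
  by_cases h : t a c
  · obtain ⟨b, hb1, hb2⟩ := h1 a c h
    rw [if_pos h, Finset.sum_eq_single b]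
    · simp [hb1, hb2]
    · intro b' _ hb'
      by_cases h4 : r a b'
      · by_cases h5 : s b' c
        · exact absurd (h3 a b' b c h4 h5 hb1 hb2) hb'
        · simp [h5]
      · simp [h4]
    · simp
  · rw [if_neg h]
    apply Finset.sum_eq_zero
    intro b _
    by_cases h4 : r a b
    · by_cases h5 : s b c
      · exact absurd (h2 a b c h4 h5) h
      · simp [h5]
    · simp [h4]

theorem relMat_transpose {X : Type} {r : X → X → Prop} (h : ∀ a b, r a b → r b a) :
    (relMat r).transpose = relMat r := by
  ext a b
  rw [Matrix.transpose_apply, relMat_apply, relMat_apply]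
  exact if_congr ⟨h b a, h a b⟩ rfl rfl

theorem relMat_mulVec {X : Type} [Fintype X] (r : X → X → Prop) (f : X → ℝ) (a : X) :
    (relMat r).mulVec f a = ∑ b ∈ Finset.univ.filter (r a), f b := by
  rw [Matrix.mulVec, dotProduct, Finset.sum_filter]
  apply Finset.sum_congr rfl
  intro b _
  rw [relMat_apply]
  split_ifs <;> simp

end Mat

section ChMat

variable {F V : Type} [Field F] [AddCommGroup V] [Module F V]
variable {B : V →ₗ[F] V →ₗ[F] F} {n : ℕ}
variable [FiniteDimensional F V] [Fintype (SFlag B (Finset.Icc 1 n))]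

theorem mat_A_eq (halt : IsAltForm B) (hnd : NondegForm B) {k : ℕ} (hk : k + 1 ≤ n) :
    (relMat (RelD k) * relMat (RelA (k+1)) : Matrix (SFlag B (Finset.Icc 1 n)) _ ℝ)
      = relMat (RelA k) := by
  apply relMat_mul
  · intro a c h
    obtain ⟨b, hb1, hb2⟩ := exists_mid halt hnd hk h.1 (h.2 (k+1) (Nat.lt_succ_self k) hk)
    exact ⟨b, hb1, (relA_step halt hnd hk hb1 hb2).2 h⟩
  · intro a b c h1 h2
    exact (relA_step halt hnd hk h1 h2.1).1 h2
  · intro a b b' c h1 h2 h3 h4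
    exact relD_unique halt hnd hk h1 h3 ((h2.1 _ le_rfl).trans (h4.1 _ le_rfl).symm)

theorem mat_DD_eq (halt : IsAltForm B) (hnd : NondegForm B) {k : ℕ} (hk : k + 2 ≤ n) :
    (relMat (RelD k) * relMat (RelD (k+1)) : Matrix (SFlag B (Finset.Icc 1 n)) _ ℝ)
      = relMat (RelDD k) := by
  have hk1 : k + 1 ≤ n := by omega
  apply relMat_mul
  · intro a c h
    obtain ⟨b, hb1, hb2⟩ := exists_mid halt hnd hk1 h.1 h.2.1
    exact ⟨b, hb1, (relDD_step halt hnd hk hb1 hb2).2 h⟩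
  · intro a b c h1 h2
    exact (relDD_step halt hnd hk h1 h2.1).1 h2
  · intro a b b' c h1 h2 h3 h4
    exact relD_unique halt hnd hk1 h1 h3 ((h2.1 _ le_rfl).trans (h4.1 _ le_rfl).symm)

theorem mat_A_symm (halt : IsAltForm B) (hnd : NondegForm B) (k : ℕ) :
    (relMat (RelA k) : Matrix (SFlag B (Finset.Icc 1 n)) _ ℝ).transpose = relMat (RelA k) :=
  relMat_transpose fun _ _ h => h.symm halt hnd

theorem mat_D_symm (halt : IsAltForm B) (hnd : NondegForm B) {k : ℕ} (hk : k + 1 ≤ n) :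
    (relMat (RelD k) : Matrix (SFlag B (Finset.Icc 1 n)) _ ℝ).transpose = relMat (RelD k) :=
  relMat_transpose fun _ _ h => h.symm halt hnd hk

theorem mat_DA_comm (halt : IsAltForm B) (hnd : NondegForm B) {k : ℕ} (hk : k + 1 ≤ n) :
    (relMat (RelD k) * relMat (RelA (k+1)) : Matrix (SFlag B (Finset.Icc 1 n)) _ ℝ)
      = relMat (RelA (k+1)) * relMat (RelD k) := by
  have h := congrArg Matrix.transpose (mat_A_eq (n := n) halt hnd hk)
  rw [Matrix.transpose_mul, mat_A_symm halt hnd, mat_A_symm halt hnd, mat_D_symm halt hnd hk,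
    ← mat_A_eq halt hnd hk] at h
  exact h.symm

theorem mat_DD_comm (halt : IsAltForm B) (hnd : NondegForm B) {k : ℕ} (hk : k + 2 ≤ n) :
    (relMat (RelD k) * relMat (RelD (k+1)) : Matrix (SFlag B (Finset.Icc 1 n)) _ ℝ)
      = relMat (RelD (k+1)) * relMat (RelD k) := by
  have h := congrArg Matrix.transpose (mat_DD_eq (n := n) halt hnd hk)
  rw [Matrix.transpose_mul, mat_D_symm halt hnd hk, mat_D_symm halt hnd (by omega : k + 1 ≤ n),
    relMat_transpose (fun _ _ h => h.symm halt hnd hk), ← mat_DD_eq halt hnd hk] at h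
  exact h.symm

theorem relT_det {j : ℕ} {a b b' c : SFlag B (Finset.Icc 1 n)} 
    (h1 : RelT j a b) (h2 : RelT j a b') (h3 : b.space j = b'.space j) : b = b' := by
  apply ch_ext
  intro i _
  by_cases h : i = j
  · rw [h, h3]
  · rw [← h1.1 i h, ← h2.1 i h]

theorem mat_TDT (halt : IsAltForm B) (hnd : NondegForm B) {k : ℕ} (hk : k + 2 ≤ n) :
    (relMat (RelT (k+1)) * relMat (RelD (k+1)) * relMat (RelT (k+1)) :
      Matrix (SFlag B (Finset.Icc 1 n)) _ ℝ) = relMat (RelD k) := by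
  have hk1 : k + 1 ≤ n := by omega
  rw [relMat_mul (t := fun a c => ∃ b, RelT (k+1) a b ∧ RelD (k+1) b c) (fun _ _ h => h)
    (fun a b c h1 h2 => ⟨b, h1, h2⟩)]
  · apply relMat_mul
    · intro a c h
      obtain ⟨C1, C2, h1, h2, h3⟩ := tdt_exists halt hnd hk h
      exact ⟨C2, ⟨C1, h1, h2⟩, h3⟩
    · rintro a b c ⟨d, h1, h2⟩ h3
      exact (tdt_sound halt hnd hk h1 h2 h3).1
    · rintro a b b' c ⟨d, h1, h2⟩ h3 ⟨d', h1', h2'⟩ h3'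
      refine relT_det h3.symm h3'.symm ?_ (c := c)
      rw [(tdt_sound halt hnd hk h1 h2 h3).2, (tdt_sound halt hnd hk h1' h2' h3').2]
  · intro a b b' c h1 h2 h3 h4
    refine relT_det h1 h3 ?_ (c := c)
    rw [h2.1 _ le_rfl, h4.1 _ le_rfl]

end ChMat


section ChCount

variable {F V : Type} [Field F] [Fintype F] [AddCommGroup V] [Module F V]
variable {B : V →ₗ[F] V →ₗ[F] F} {n : ℕ}
variable [FiniteDimensional F V] [Fintype (SFlag B (Finset.Icc 1 n))]

theorem relT_card {k : ℕ} (hk : k + 2 ≤ n) (C : SFlag B (Finset.Icc 1 n)) :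
    (Finset.univ.filter (RelT (k+1) C)).card = Fintype.card F := by
  have h1 := card_covers_one (U := C.space k) (W := C.space (k+2)) (H := C.space (k+1)) (d := 1)
    (ch_mono C (by omega) (by omega)) (ch_mono C (by omega) hk)
    (by rw [ch_rank C (by omega), ch_rank C (by omega)])
    (by rw [ch_rank C (by omega), ch_rank C (by omega)])
  rw [pow_one] at h1
  rw [← h1]
  refine Finset.card_bij (fun b _ => b.space (k+1)) ?_ ?_ ?_
  · intro b hb
    simp only [Finset.mem_filter, Finset.mem_univ, true_and] at hb
    rw [mem_covers]
    refine ⟨?_, ?_, ?_, ?_⟩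
    · rw [hb.1 k (by omega)]; exact ch_mono b (by omega) (by omega)
    · rw [hb.1 (k+2) (by omega)]; exact ch_mono b (by omega) (by omega)
    · rw [ch_rank b (by omega), ch_rank C (by omega)]
    · intro h
      exact hb.2 (Submodule.eq_of_le_of_finrank_le h
        (by rw [ch_rank b (by omega), ch_rank C (by omega)])).symm
  · intro b hb b' hb' h
    simp only [Finset.mem_filter, Finset.mem_univ, true_and] at hb hb'
    exact relT_det (c := C) hb hb' h
  · intro p hp
    rw [mem_covers, ch_rank C (by omega)] at hp
    obtain ⟨b, hb1, hb2⟩ := exists_replace hk C hp.1 hp.2.1 hp.2.2.1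
    refine ⟨b, ?_, hb2⟩
    simp only [Finset.mem_filter, Finset.mem_univ, true_and]
    refine ⟨fun i hi => (hb1 i hi).symm, ?_⟩
    rw [hb2]
    rintro h
    exact hp.2.2.2 h.symm.le

theorem relT_eq_or {j : ℕ} {a b c : SFlag B (Finset.Icc 1 n)} (h1 : RelT j a b) (h2 : RelT j b c) :
    a = c ∨ RelT j a c := by
  by_cases h : a.space j = c.space j
  · left
    apply ch_ext
    intro i _
    by_cases hi : i = j
    · rw [hi, h]
    · rw [h1.1 i hi, h2.1 i hi]
  · exact Or.inr ⟨fun i hi => (h1.1 i hi).trans (h2.1 i hi), h⟩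

theorem mat_T_sq {k : ℕ} (hk : k + 2 ≤ n) :
    (relMat (RelT (k+1)) * relMat (RelT (k+1)) : Matrix (SFlag B (Finset.Icc 1 n)) _ ℝ)
      = ((Fintype.card F : ℝ) - 1) • relMat (RelT (k+1)) + (Fintype.card F : ℝ) • 1 := by
  ext a c
  have h0 : (relMat (RelT (k+1)) * relMat (RelT (k+1)) : Matrix (SFlag B (Finset.Icc 1 n)) _ ℝ) a c
      = ((Finset.univ.filter fun b => RelT (k+1) a b ∧ RelT (k+1) b c).card : ℝ) := by
    rw [Matrix.mul_apply, Finset.card_filter, Nat.cast_sum]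
    apply Finset.sum_congr rfl
    intro b _
    rw [relMat_apply, relMat_apply]
    by_cases h1 : RelT (k+1) a b <;> by_cases h2 : RelT (k+1) b c <;> simp [h1, h2]
  rw [h0, Matrix.add_apply, Matrix.smul_apply, Matrix.smul_apply, relMat_apply, smul_eq_mul,
    smul_eq_mul, Matrix.one_apply]
  by_cases hac : a = c
  · subst hac
    have : ¬ RelT (k+1) a a := fun h => h.2 rfl
    rw [if_neg this, if_pos rfl]
    have h1 : (Finset.univ.filter fun b => RelT (k+1) a b ∧ RelT (k+1) b a) =
        Finset.univ.filter (RelT (k+1) a) := by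
      apply Finset.filter_congr
      intro b _
      exact ⟨fun h => h.1, fun h => ⟨h, h.symm⟩⟩
    rw [h1, relT_card hk]
    ring
  · rw [if_neg hac]
    by_cases h : RelT (k+1) a c
    · rw [if_pos h]
      have h1 : (Finset.univ.filter fun b => RelT (k+1) a b ∧ RelT (k+1) b c) =
        (Finset.univ.filter (RelT (k+1) a)).erase c := by
        ext b
        simp only [Finset.mem_filter, Finset.mem_univ, true_and, Finset.mem_erase]
        constructor
        · rintro ⟨h1, h2⟩
          exact ⟨fun e => h2.2 (by rw [e]), h1⟩
        · rintro ⟨h1, h2⟩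
          refine ⟨h2, (relT_eq_or h2.symm h).resolve_left h1⟩
      rw [h1, Finset.card_erase_of_mem (by simpa using h), relT_card hk,
        Nat.cast_sub Fintype.card_pos]
      simp
    · rw [if_neg h]
      have h1 : (Finset.univ.filter fun b => RelT (k+1) a b ∧ RelT (k+1) b c) = ∅ := by
        apply Finset.filter_false_of_mem
        rintro b _ ⟨h1, h2⟩
        exact (relT_eq_or h1 h2).elim hac h
      rw [h1]
      simp

theorem opp_iff_not_le (halt : IsAltForm B) {k : ℕ} (hk : k + 1 ≤ n)
    (C : SFlag B (Finset.Icc 1 n)) {p : Submodule F V} (hp : C.space k ≤ p)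
    (hr : finrank F p = k + 1) :
    bperp B (C.space (k+1)) ⊓ p ≤ C.space k ↔ ¬ p ≤ bperp B (C.space (k+1)) := by
  constructor
  · intro h h'
    have h1 := Submodule.finrank_mono ((le_inf h' le_rfl).trans h)
    rw [hr, ch_rank C (by omega)] at h1
    omega
  · intro h
    rw [inf_comm]
    apply le_of_eq
    apply cover_inf hp
    · rw [hr, ch_rank C (by omega)]
    · exact ch_perp halt C (by omega) hk
    · exact h

theorem sum_relD (halt : IsAltForm B) (hnd : NondegForm B) {k : ℕ} (hk : k + 1 ≤ n)
    (C : SFlag B (Finset.Icc 1 n)) (φ : Submodule F V → ℝ) :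
    ∑ b ∈ Finset.univ.filter (RelD k C), φ (b.space (k+1)) =
      ∑ p ∈ covers (C.space k) (bperp B (C.space k)) (fun p => ¬ p ≤ bperp B (C.space (k+1))),
        φ p := by
  refine Finset.sum_bij (fun b _ => b.space (k+1)) ?_ ?_ ?_ ?_
  · intro b hb
    simp only [Finset.mem_filter, Finset.mem_univ, true_and] at hb
    rw [mem_covers]
    have hkk := hb.1 k le_rfl
    have h1 : C.space k ≤ b.space (k+1) := by
      rw [hkk]; exact ch_mono b (by omega) hk
    refine ⟨h1, ?_, ?_, ?_⟩
    · rw [hkk]; exact ch_perp halt b hk (by omega)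
    · rw [ch_rank b hk, ch_rank C (by omega)]
    · exact (opp_iff_not_le halt hk C h1 (ch_rank b hk)).1 hb.2.1
  · intro b hb b' hb' h
    simp only [Finset.mem_filter, Finset.mem_univ, true_and] at hb hb'
    exact relD_unique halt hnd hk hb hb' h
  · intro p hp
    rw [mem_covers, ch_rank C (by omega)] at hp
    obtain ⟨b, hb1, hb2⟩ := exists_proj halt hnd hk C hp.1 hp.2.2.1 hp.2.1
      ((opp_iff_not_le halt hk C hp.1 hp.2.2.1).2 hp.2.2.2)
    exact ⟨b, by simpa using hb1, hb2⟩
  · intro b hb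
    rfl

theorem perp_rank (halt : IsAltForm B) (hnd : NondegForm B) (hdim : finrank F V = 2 * n)
    {i : ℕ} {p : Submodule F V} (hp : finrank F p = i) (hi : i ≤ n) :
    finrank F (bperp B p) = 2 * n - i := by
  have := finrank_bperp halt hnd p
  omega

theorem card_opp (halt : IsAltForm B) (hnd : NondegForm B) (hdim : finrank F V = 2 * n)
    {k : ℕ} (hk : k + 1 ≤ n) (C : SFlag B (Finset.Icc 1 n)) {p : Submodule F V}
    (hp : C.space k ≤ p) (hpp : p ≤ bperp B (C.space k)) (hr : finrank F p = k + 1) :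
    (covers (C.space k) (bperp B (C.space k)) (fun p' => ¬ p' ≤ bperp B p)).card =
      Fintype.card F ^ (2 * (n - k) - 1) := by
  apply card_covers_one
  · exact (le_bperp_comm halt).1 hpp
  · exact bperp_anti B hp
  · rw [perp_rank halt hnd hdim hr hk, ch_rank C (by omega)]; omega
  · rw [perp_rank halt hnd hdim hr hk, perp_rank halt hnd hdim (ch_rank C (by omega)) (by omega)]
    omega

theorem card_opp_two (halt : IsAltForm B) (hnd : NondegForm B) (hdim : finrank F V = 2 * n)
    {k : ℕ} (hk : k + 1 ≤ n) (C : SFlag B (Finset.Icc 1 n)) {p p2 : Submodule F V}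
    (hp : C.space k ≤ p) (hpp : p ≤ bperp B (C.space k)) (hr : finrank F p = k + 1)
    (hp2 : C.space k ≤ p2) (hpp2 : p2 ≤ bperp B (C.space k)) (hr2 : finrank F p2 = k + 1)
    (hne : p ≠ p2) :
    (covers (C.space k) (bperp B (C.space k))
      (fun p' => ¬ p' ≤ bperp B p ∧ ¬ p' ≤ bperp B p2)).card =
      Fintype.card F ^ (2 * (n - k) - 2) * (Fintype.card F - 1) := by
  apply card_covers_two
  · exact (le_bperp_comm halt).1 hpp
  · exact bperp_anti B hp
  · exact (le_bperp_comm halt).1 hpp2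
  · exact bperp_anti B hp2
  · intro h
    apply hne
    rw [← bperp_bperp halt hnd p, h, bperp_bperp halt hnd]
  · rw [perp_rank halt hnd hdim hr hk, ch_rank C (by omega)]; omega
  · rw [perp_rank halt hnd hdim hr hk, perp_rank halt hnd hdim (ch_rank C (by omega)) (by omega)]
    omega
  · rw [perp_rank halt hnd hdim hr2 hk, perp_rank halt hnd hdim (ch_rank C (by omega)) (by omega)]
    omega

theorem relD_card (halt : IsAltForm B) (hnd : NondegForm B) (hdim : finrank F V = 2 * n)
    {k : ℕ} (hk : k + 1 ≤ n) (C : SFlag B (Finset.Icc 1 n)) :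
    ((Finset.univ.filter (RelD k C)).card : ℝ) = (Fintype.card F : ℝ) ^ (2 * (n - k) - 1) := by
  have h := sum_relD halt hnd hk C (fun _ => 1)
  rw [Finset.sum_const, Finset.sum_const, card_opp halt hnd hdim hk C (ch_mono C (by omega) hk)
    (ch_perp halt C hk (by omega)) (ch_rank C hk)] at h
  simpa using h

/-- Functions of chambers depending only on the first `k` spaces. -/
def SS (B : V →ₗ[F] V →ₗ[F] F) (n k : ℕ) : Submodule ℝ (SFlag B (Finset.Icc 1 n) → ℝ) where
  carrier := {f | ∀ C C', Agree k C C' → f C = f C'}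
  add_mem' := by
    intro f g hf hg C C' h
    rw [Pi.add_apply, Pi.add_apply, hf C C' h, hg C C' h]
  zero_mem' := fun _ _ _ => rfl
  smul_mem' := by
    intro c f hf C C' h
    rw [Pi.smul_apply, Pi.smul_apply, hf C C' h]

theorem SS_mono {k j : ℕ} (h : k ≤ j) : SS B n k ≤ SS B n j :=
  fun _ hf C C' hC => hf C C' (hC.mono h)

theorem SS_top : SS B n n = ⊤ := by
  rw [eq_top_iff]
  intro f _ C C' h
  rw [ch_ext h]

theorem D_SS (halt : IsAltForm B) (hnd : NondegForm B) (hdim : finrank F V = 2 * n)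
    {k : ℕ} (hk : k + 1 ≤ n) {f : SFlag B (Finset.Icc 1 n) → ℝ} (hf : f ∈ SS B n k) :
    (relMat (RelD k)).mulVec f = ((Fintype.card F : ℝ) ^ (2 * (n - k) - 1)) • f := by
  funext C
  rw [relMat_mulVec, Pi.smul_apply, smul_eq_mul, ← relD_card halt hnd hdim hk C,
    Finset.sum_congr rfl (g := fun _ => f C), Finset.sum_const, nsmul_eq_mul]
  intro b hb
  simp only [Finset.mem_filter, Finset.mem_univ, true_and] at hb
  exact (hf _ _ hb.1).symm

/-- the value of `f` on a chamber agreeing with `C` up to `k` and having next space `p`. -/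
noncomputable def Fc (k : ℕ) (f : SFlag B (Finset.Icc 1 n) → ℝ) (C : SFlag B (Finset.Icc 1 n))
    (p : Submodule F V) : ℝ :=
  if h : ∃ C' : SFlag B (Finset.Icc 1 n), Agree k C C' ∧ C'.space (k+1) = p then f h.choose else 0

theorem Fc_eq {k : ℕ} {f : SFlag B (Finset.Icc 1 n) → ℝ} (hf : f ∈ SS B n (k+1))
    {C C' : SFlag B (Finset.Icc 1 n)} (h : Agree k C C') : Fc k f C (C'.space (k+1)) = f C' := by
  have hex : ∃ D : SFlag B (Finset.Icc 1 n), Agree k C D ∧ D.space (k+1) = C'.space (k+1) :=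
    ⟨C', h, rfl⟩
  rw [Fc, dif_pos hex]
  apply hf
  intro i hi
  obtain ⟨h1, h2⟩ := hex.choose_spec
  rcases Nat.lt_or_ge k i with h3 | h3
  · obtain rfl : i = k + 1 := by omega
    exact h2
  · exact (h1 i h3).symm.trans (h i h3)

theorem Fc_congr {k : ℕ} {f : SFlag B (Finset.Icc 1 n) → ℝ} 
    {C C' : SFlag B (Finset.Icc 1 n)} (h : Agree k C C') : Fc k f C = Fc k f C' := by
  have : Agree k C = Agree k C' := by
    funext D
    exact propext ⟨fun h' => h.symm.trans h', fun h' => h.trans h'⟩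
  unfold Fc
  rw [this]

theorem D_apply (halt : IsAltForm B) (hnd : NondegForm B) 
    {k : ℕ} (hk : k + 1 ≤ n) {f : SFlag B (Finset.Icc 1 n) → ℝ} (hf : f ∈ SS B n (k+1))
    (C : SFlag B (Finset.Icc 1 n)) :
    (relMat (RelD k)).mulVec f C = ∑ p ∈ covers (C.space k) (bperp B (C.space k))
      (fun p => ¬ p ≤ bperp B (C.space (k+1))), Fc k f C p := by
  rw [relMat_mulVec, ← sum_relD halt hnd hk C]
  apply Finset.sum_congr rfl
  intro b hb
  simp only [Finset.mem_filter, Finset.mem_univ, true_and] at hb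
  exact (Fc_eq hf hb.1).symm

theorem D_mem (halt : IsAltForm B) (hnd : NondegForm B) 
    {k : ℕ} (hk : k + 1 ≤ n) {f : SFlag B (Finset.Icc 1 n) → ℝ} (hf : f ∈ SS B n (k+1)) :
    (relMat (RelD k)).mulVec f ∈ SS B n (k+1) := by
  intro C C' h
  rw [D_apply halt hnd hk hf, D_apply halt hnd hk hf, Fc_congr (h.mono (by omega : k ≤ k + 1)),
    h k (by omega), h (k+1) le_rfl]

theorem D_sq (halt : IsAltForm B) (hnd : NondegForm B) (hdim : finrank F V = 2 * n)
    {k : ℕ} (hk : k + 1 ≤ n) {f : SFlag B (Finset.Icc 1 n) → ℝ} (hf : f ∈ SS B n (k+1)) :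
    ∃ g ∈ SS B n k, (relMat (RelD k)).mulVec ((relMat (RelD k)).mulVec f) =
      ((Fintype.card F : ℝ) ^ (2 * (n - k) - 2)) • f + g := by
  refine ⟨fun C => (Fintype.card F : ℝ) ^ (2 * (n - k) - 2) * ((Fintype.card F : ℝ) - 1) *
    ∑ p ∈ covers (C.space k) (bperp B (C.space k)) (fun _ => True), Fc k f C p, ?_, ?_⟩
  · intro C C' h
    simp only
    rw [Fc_congr h, h k le_rfl]
  · funext C
    rw [relMat_mulVec, Pi.add_apply, Pi.smul_apply, smul_eq_mul]
    have h1 : ∀ b ∈ Finset.univ.filter (RelD k C), (relMat (RelD k)).mulVec f b =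
        ∑ p ∈ covers (C.space k) (bperp B (C.space k)) (fun _ => True),
          if ¬ p ≤ bperp B (b.space (k+1)) then Fc k f C p else 0 := by
      intro b hb
      simp only [Finset.mem_filter, Finset.mem_univ, true_and] at hb
      rw [D_apply halt hnd hk hf, ← Fc_congr hb.1, ← hb.1 k le_rfl, ← Finset.sum_filter]
      apply Finset.sum_congr _ fun _ _ => rfl
      ext p
      simp [mem_covers, and_assoc]
    rw [Finset.sum_congr rfl h1, sum_relD halt hnd hk C (fun p' =>
      ∑ p ∈ covers (C.space k) (bperp B (C.space k)) (fun _ => True),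
          if ¬ p ≤ bperp B p' then Fc k f C p else 0), Finset.sum_comm]
    have hCm : C.space (k+1) ∈ covers (C.space k) (bperp B (C.space k)) (fun _ => True) := by
      rw [mem_covers]
      exact ⟨ch_mono C (by omega) hk, ch_perp halt C hk (by omega),
        by rw [ch_rank C hk, ch_rank C (by omega)], trivial⟩
    have h2 : ∀ p ∈ covers (C.space k) (bperp B (C.space k)) (fun _ => True),
        (∑ p' ∈ covers (C.space k) (bperp B (C.space k))
          (fun p => ¬ p ≤ bperp B (C.space (k+1))), if ¬ p ≤ bperp B p' then Fc k f C p else 0) =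
        (Fintype.card F : ℝ) ^ (2 * (n - k) - 2) * ((Fintype.card F : ℝ) - 1) * Fc k f C p +
        if p = C.space (k+1) then (Fintype.card F : ℝ) ^ (2 * (n - k) - 2) * f C else 0 := by
      intro p hp
      rw [mem_covers] at hp
      rw [← Finset.sum_filter, Finset.sum_const]
      have h3 : (Finset.filter (fun p' => ¬ p ≤ bperp B p') (covers (C.space k) (bperp B (C.space k))
          (fun p => ¬ p ≤ bperp B (C.space (k+1))))) = covers (C.space k) (bperp B (C.space k))
          (fun p' => ¬ p' ≤ bperp B (C.space (k+1)) ∧ ¬ p' ≤ bperp B p) := by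
        ext p'
        simp only [Finset.mem_filter, mem_covers, and_assoc, le_bperp_comm halt (X := p)]
      rw [h3]
      split_ifs with h4
      · subst h4
        simp only [and_self]
        rw [card_opp halt hnd hdim hk C hp.1 hp.2.1 (ch_rank C hk),
          Fc_eq hf (fun i _ => rfl : Agree k C C), nsmul_eq_mul]
        have : 2 * (n - k) - 1 = (2 * (n - k) - 2) + 1 := by omega
        rw [this, pow_succ]
        push_cast
        ring
      · rw [card_opp_two halt hnd hdim hk C (ch_mono C (by omega) hk)
          (ch_perp halt C hk (by omega)) (ch_rank C hk) hp.1 hp.2.1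
          (by rw [hp.2.2.1, ch_rank C (by omega)]) (Ne.symm h4), nsmul_eq_mul]
        rw [Nat.cast_mul, Nat.cast_pow, Nat.cast_sub Fintype.card_pos]
        simp
    rw [Finset.sum_congr rfl h2, Finset.sum_add_distrib, Finset.sum_ite_eq', if_pos hCm,
      ← Finset.mul_sum]
    ring

theorem A_SS (halt : IsAltForm B) (hnd : NondegForm B) (hdim : finrank F V = 2 * n) (m : ℕ) :
    ∀ {k : ℕ}, k + m = n → ∀ {f : SFlag B (Finset.Icc 1 n) → ℝ}, f ∈ SS B n k →
    (relMat (RelA k)).mulVec f = ((Fintype.card F : ℝ) ^ (m ^ 2)) • f := by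
  induction m with
  | zero =>
    intro k hk f hf
    obtain rfl : k = n := by omega
    funext C
    rw [relMat_mulVec, Finset.sum_eq_single C]
    · simp
    · intro b hb hne
      simp only [Finset.mem_filter, Finset.mem_univ, true_and] at hb
      exact absurd (ch_ext hb.1).symm hne
    · intro h
      exfalso
      apply h
      simp only [Finset.mem_filter, Finset.mem_univ, true_and]
      exact ⟨fun _ _ => rfl, fun i h1 h2 => by omega⟩
  | succ m ih =>
    intro k hk f hf
    rw [← mat_A_eq halt hnd (by omega), ← Matrix.mulVec_mulVec,
      ih (k := k + 1) (by omega) (SS_mono (by omega) hf), Matrix.mulVec_smul,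
      D_SS halt hnd hdim (by omega) hf, smul_smul, ← pow_add]
    congr 2
    have : n - k = m + 1 := by omega
    rw [this]
    have : 2 * (m + 1) - 1 = 2 * m + 1 := by omega
    rw [this]
    ring

end ChCount


section LinAlg

variable {X : Type} [Fintype X]

/-- Orthogonal complement for the dot product. -/
def orth (S : Submodule ℝ (X → ℝ)) : Submodule ℝ (X → ℝ) where
  carrier := {v | ∀ s ∈ S, v ⬝ᵥ s = 0}
  add_mem' := by
    intro f g hf hg s hs
    rw [add_dotProduct, hf s hs, hg s hs, add_zero]
  zero_mem' := fun s _ => zero_dotProduct s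
  smul_mem' := by
    intro c f hf s hs
    rw [smul_dotProduct, hf s hs, smul_zero]

theorem orth_anti {S T : Submodule ℝ (X → ℝ)} (h : S ≤ T) : orth T ≤ orth S :=
  fun _ hv s hs => hv s (h hs)

theorem mulVec_dot {M : Matrix X X ℝ} (hM : M.transpose = M) (v w : X → ℝ) :
    M.mulVec v ⬝ᵥ w = v ⬝ᵥ M.mulVec w := by
  rw [Matrix.dotProduct_mulVec, ← Matrix.mulVec_transpose, hM]

theorem orth_invariant {M : Matrix X X ℝ} (hM : M.transpose = M) {S : Submodule ℝ (X → ℝ)}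
    (hS : ∀ s ∈ S, M.mulVec s ∈ S) {v : X → ℝ} (hv : v ∈ orth S) : M.mulVec v ∈ orth S := by
  intro s hs
  rw [mulVec_dot hM]
  exact hv _ (hS s hs)

theorem orth_decomp (S : Submodule ℝ (X → ℝ)) (v : X → ℝ) :
    ∃ v1 ∈ S, ∃ v2 ∈ orth S, v = v1 + v2 := by
  let e := (WithLp.linearEquiv 2 ℝ (X → ℝ))
  obtain ⟨y, hy, z, hz, h⟩ := (S.comap e.toLinearMap).exists_add_mem_mem_orthogonal (e.symm v)
  refine ⟨e y, hy, e z, ?_, ?_⟩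
  · intro s hs
    have := (Submodule.mem_orthogonal _ z).1 hz (e.symm s) (by simpa using hs)
    rw [EuclideanSpace.inner_eq_star_dotProduct] at this
    exact this
  · rw [← map_add, ← h]; simp

theorem dot_self_pos {v : X → ℝ} (hv : v ≠ 0) : v ⬝ᵥ v ≠ 0 := by
  intro h
  exact hv (dotProduct_self_eq_zero.1 h)

theorem eig_split {M : Matrix X X ℝ} (hM : M.transpose = M) {S : Submodule ℝ (X → ℝ)}
    (hS : ∀ s ∈ S, M.mulVec s ∈ S) {v1 v2 : X → ℝ} {b : ℝ} (h1 : v1 ∈ S) (h2 : v2 ∈ orth S)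
    (h : M.mulVec (v1 + v2) = b • (v1 + v2)) : M.mulVec v1 = b • v1 ∧ M.mulVec v2 = b • v2 := by
  have e : M.mulVec v1 - b • v1 = -(M.mulVec v2 - b • v2) := by
    rw [Matrix.mulVec_add, smul_add] at h
    linear_combination (exp := 1) h
  have m1 : M.mulVec v1 - b • v1 ∈ S := S.sub_mem (hS _ h1) (S.smul_mem _ h1)
  have m2 : M.mulVec v1 - b • v1 ∈ orth S := by
    rw [e]
    exact (orth S).neg_mem ((orth S).sub_mem (orth_invariant hM hS h2) ((orth S).smul_mem _ h2))
  have h0 : M.mulVec v1 - b • v1 = 0 := dotProduct_self_eq_zero.1 (m2 _ m1)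
  refine ⟨sub_eq_zero.1 h0, ?_⟩
  rw [h0] at e
  exact sub_eq_zero.1 (neg_eq_zero.1 e.symm)

theorem exists_eig {M : Matrix X X ℝ} (hM : M.transpose = M) {W : Submodule ℝ (X → ℝ)}
    (hW : ∀ s ∈ W, M.mulVec s ∈ W) {w : X → ℝ} (hw : w ∈ W) (hw0 : w ≠ 0) :
    ∃ v ∈ W, v ≠ 0 ∧ ∃ b : ℝ, M.mulVec v = b • v := by
  let e := (WithLp.linearEquiv 2 ℝ (X → ℝ))
  have hsym : M.toEuclideanLin.IsSymmetric := by
    rw [Matrix.isSymmetric_toEuclideanLin_iff, Matrix.IsHermitian,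
      Matrix.conjTranspose_eq_transpose_of_trivial]
    exact hM
  have hr := hsym.restrict_invariant (V := W.comap e.toLinearMap) (fun v hv => hW _ hv)
  by_contra hcon
  push Not at hcon
  have := hr.subsingleton_of_no_eigenvalue_finiteDimensional (by
    intro b
    rw [eq_bot_iff]
    intro x hx
    rw [Module.End.mem_eigenspace_iff] at hx
    by_contra hx0
    refine hcon (e x.1) x.2 ?_ b ?_
    · intro h
      apply hx0
      rw [Submodule.mem_bot]
      apply Subtype.ext
      exact e.map_eq_zero_iff.1 h
    · have := congrArg (fun y => e y.1) hx
      exact this)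
  have h2 : (⟨e.symm w, by simpa using hw⟩ : W.comap e.toLinearMap) = 0 := Subsingleton.elim _ _
  apply hw0
  have h3 := congrArg (fun y => e y.1) h2
  simpa using h3

theorem eig_row_bound {r : X → X → Prop} {d : ℝ}
    (hd : ∀ a, ((Finset.univ.filter (r a)).card : ℝ) = d) {v : X → ℝ} (hv : v ≠ 0) {b : ℝ}
    (h : (relMat r).mulVec v = b • v) : |b| ≤ d := by
  obtain ⟨x, hx⟩ := Function.ne_iff.1 hv
  obtain ⟨a, -, ha⟩ := Finset.exists_max_image Finset.univ (fun y => |v y|) ⟨x, Finset.mem_univ x⟩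
  have hpos : 0 < |v a| := lt_of_lt_of_le (abs_pos.2 hx) (ha x (Finset.mem_univ x))
  have h1 := congrFun h a
  rw [relMat_mulVec, Pi.smul_apply, smul_eq_mul] at h1
  have h2 : |b| * |v a| ≤ d * |v a| := by
    rw [← abs_mul, ← h1, ← hd a, ← nsmul_eq_mul, ← Finset.sum_const]
    exact (Finset.abs_sum_le_sum_abs _ _).trans
      (Finset.sum_le_sum fun y _ => ha y (Finset.mem_univ y))
  exact le_of_mul_le_mul_right h2 hpos

/-- The rank two argument. -/
theorem rank_two_bound {T D D0 : Matrix X X ℝ} {q β a b : ℝ} (hq : 1 < q)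
    (hT : T * T = (q - 1) • T + q • 1) (hTDT : T * D * T = D0) {v : X → ℝ} (hv : v ≠ 0)
    (ha : D.mulVec v = a • v) (hb : D0.mulVec v = b • v) (haβ : |a| ≤ β)
    (hD : ∀ (u : X → ℝ) (c : ℝ), u ≠ 0 → D.mulVec u = c • u → |c| ≤ q * β) :
    |b| ≤ q ^ 2 * β := by
  by_contra hcon
  push Not at hcon
  have hβ : 0 ≤ β := (abs_nonneg a).trans haβ
  have hb0 : b ≠ 0 := by
    rintro rfl
    rw [abs_zero] at hcon
    have : 0 ≤ q ^ 2 * β := by positivity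
    linarith
  have hq0 : q ≠ 0 := by positivity
  have hTT : ∀ w : X → ℝ, T.mulVec (T.mulVec w) = (q - 1) • T.mulVec w + q • w := by
    intro w
    rw [Matrix.mulVec_mulVec, hT, Matrix.add_mulVec, Matrix.smul_mulVec, Matrix.smul_mulVec,
      Matrix.one_mulVec]
  have h1 : T.mulVec (D.mulVec (T.mulVec v)) = b • v := by
    rw [Matrix.mulVec_mulVec, Matrix.mulVec_mulVec, hTDT, hb]
  have h2 : q • D.mulVec (T.mulVec v) = b • (T.mulVec v - (q - 1) • v) := by
    have h3 := hTT (D.mulVec (T.mulVec v))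
    rw [h1, Matrix.mulVec_smul] at h3
    rw [smul_sub, h3, smul_comm b (q-1) v]
    abel
  have hne : b - a * q ≠ 0 := by
    intro h
    have : |b| = |a| * q := by
      rw [show b = a * q by linarith, abs_mul, abs_of_pos (by linarith : 0 < q)]
    rw [this] at hcon
    nlinarith [mul_nonneg hβ (by linarith : (0:ℝ) ≤ q - 1), mul_nonneg (mul_nonneg hβ (by linarith : (0:ℝ) ≤ q)) (by linarith : (0:ℝ) ≤ q - 1)]
  obtain ⟨c, hc⟩ : ∃ c, c = (q - 1) * b / (b - a * q) := ⟨_, rfl⟩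
  have hc2 : c * b = (q - 1) * b + c * a * q := by
    have : c * (b - a * q) = (q - 1) * b := by rw [hc]; exact div_mul_cancel₀ _ hne
    linarith
  by_cases hu : T.mulVec v - c • v = 0
  · have hTv : T.mulVec v = c • v := sub_eq_zero.1 hu
    rw [hTv, Matrix.mulVec_smul, ha, Matrix.mulVec_smul, Matrix.mulVec_smul, hTv, smul_smul,
      smul_smul] at h1
    have h4 : c * a * c = b := smul_left_injective ℝ hv h1
    have h5 := hTT v
    rw [hTv, Matrix.mulVec_smul, hTv, smul_smul, smul_smul, ← add_smul] at h5
    have h6 : c * c = (q - 1) * c + q := smul_left_injective ℝ hv h5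
    have h7 : (c - q) * (c + 1) = 0 := by linarith
    have h8 : c ^ 2 ≤ q ^ 2 := by
      rcases mul_eq_zero.1 h7 with h | h
      · rw [show c = q by linarith]
      · rw [show c = -1 by linarith]; nlinarith
    have h9 : |b| = c ^ 2 * |a| := by
      rw [← h4, show c * a * c = c ^ 2 * a by ring, abs_mul, abs_of_nonneg (sq_nonneg c)]
    have h10 : c ^ 2 * |a| ≤ q ^ 2 * β := mul_le_mul h8 haβ (abs_nonneg a) (sq_nonneg q)
    linarith
  · have h3 : D.mulVec (T.mulVec v) = (b / q) • (T.mulVec v - (q - 1) • v) := by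
      rw [div_eq_inv_mul, ← smul_smul, ← h2, smul_smul, inv_mul_cancel₀ hq0, one_smul]
    have h4 : D.mulVec (T.mulVec v - c • v) = (b / q) • (T.mulVec v - c • v) := by
      rw [Matrix.mulVec_sub, Matrix.mulVec_smul, ha, h3]
      funext x
      simp only [Pi.sub_apply, Pi.smul_apply, smul_eq_mul]
      field_simp
      linear_combination (v x) * hc2
    have h5 := hD _ _ hu h4
    rw [abs_div, abs_of_pos (by linarith : 0 < q), div_le_iff₀ (by linarith)] at h5
    nlinarith

end LinAlg


section KeyDef

variable {F V : Type} [Field F] [Fintype F] [AddCommGroup V] [Module F V]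

/-- The key property of the opposition graph of type `J`. -/
def KeyProp (B : V →ₗ[F] V →ₗ[F] F) (n : ℕ) (J : Finset ℕ) [Fintype (SFlag B J)] : Prop :=
  ∃ k : ℝ, 0 ≤ k ∧ (∀ E : SFlag B J, ((Finset.univ.filter (FlagOpp E)).card : ℝ) = k) ∧
    ∀ (v : SFlag B J → ℝ) (μ : ℝ), v ≠ 0 → (relMat FlagOpp).mulVec v = μ • v →
      -k ≤ μ * (Fintype.card F : ℝ) ^ n

end KeyDef

section ChBound

variable {F V : Type} [Field F] [Fintype F] [AddCommGroup V] [Module F V]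
variable {B : V →ₗ[F] V →ₗ[F] F} {n : ℕ}
variable [FiniteDimensional F V] [Fintype (SFlag B (Finset.Icc 1 n))]

theorem one_lt_q : (1 : ℝ) < (Fintype.card F : ℝ) := by
  exact_mod_cast Fintype.one_lt_card

theorem D_low (halt : IsAltForm B) (hnd : NondegForm B) (hdim : finrank F V = 2 * n)
    {k : ℕ} (hk : k + 1 ≤ n) {v : SFlag B (Finset.Icc 1 n) → ℝ} (hv : v ≠ 0)
    (hvS : v ∈ SS B n (k+1)) (hvo : v ∈ orth (SS B n k)) {b : ℝ}
    (hb : (relMat (RelD k)).mulVec v = b • v) : |b| = (Fintype.card F : ℝ) ^ (n - k - 1) := by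
  obtain ⟨g, hg, h⟩ := D_sq halt hnd hdim hk hvS
  rw [hb, Matrix.mulVec_smul, hb] at h
  have h1 := congrArg (fun w => v ⬝ᵥ w) h
  simp only [dotProduct_add, dotProduct_smul, hvo g hg, smul_eq_mul, add_zero] at h1
  have h2 : b * b = (Fintype.card F : ℝ) ^ (2 * (n - k) - 2) := by
    rw [← mul_assoc] at h1
    exact mul_right_cancel₀ (dot_self_pos hv) h1
  have h3 : 2 * (n - k) - 2 = (n - k - 1) * 2 := by omega
  rw [h3, pow_mul] at h2
  have h4 : |b| ^ 2 = ((Fintype.card F : ℝ) ^ (n - k - 1)) ^ 2 := by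
    rw [sq_abs, ← h2, sq]
  exact (pow_left_inj₀ (abs_nonneg b) (by positivity) two_ne_zero).1 h4

theorem orth_top_zero {k : ℕ} (hk : k = n) {v : SFlag B (Finset.Icc 1 n) → ℝ}
    (hv : v ∈ orth (SS B n k)) : v = 0 := by
  subst hk
  rw [SS_top] at hv
  exact dotProduct_self_eq_zero.1 (hv v trivial)

theorem D_bound (halt : IsAltForm B) (hnd : NondegForm B) (hdim : finrank F V = 2 * n) (m : ℕ) :
    ∀ {k : ℕ}, k + m + 1 = n → ∀ {v : SFlag B (Finset.Icc 1 n) → ℝ}, v ≠ 0 →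
    v ∈ orth (SS B n k) → ∀ {b : ℝ}, (relMat (RelD k)).mulVec v = b • v →
    |b| ≤ (Fintype.card F : ℝ) ^ (2 * m) := by
  have hq1 := one_lt_q (F := F)
  induction m with
  | zero =>
    intro k hk v hv hvo b hb
    have := D_low halt hnd hdim (by omega) hv (by
      rw [show k + 1 = n by omega, SS_top]; trivial) hvo hb
    rw [this, show n - k - 1 = 0 by omega]
  | succ m ih =>
    intro k hk v hv hvo b hb
    have hk1 : k + 1 ≤ n := by omega
    have hk2 : k + 2 ≤ n := by omega
    have hsym := mat_D_symm (n := n) halt hnd hk1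
    have hinv : ∀ s ∈ SS B n (k+1), (relMat (RelD k)).mulVec s ∈ SS B n (k+1) :=
      fun s hs => D_mem halt hnd hk1 hs
    obtain ⟨v1, hv1, v2, hv2, rfl⟩ := orth_decomp (SS B n (k+1)) v
    have hv2k := orth_anti (SS_mono (B := B) (n := n) (by omega : k ≤ k + 1)) hv2
    have hv1k : v1 ∈ orth (SS B n k) := by
      have := (orth (SS B n k)).sub_mem hvo hv2k
      rwa [add_sub_cancel_right] at this
    obtain ⟨e1, e2⟩ := eig_split hsym hinv hv1 hv2 hb
    by_cases h1 : v1 = 0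
    · have hv20 : v2 ≠ 0 := by
        rintro rfl
        exact hv (by rw [h1, add_zero])
      have hsym' := mat_D_symm (n := n) (k := k+1) halt hnd hk2
      let W : Submodule ℝ (SFlag B (Finset.Icc 1 n) → ℝ) :=
        Module.End.eigenspace (Matrix.mulVecLin (relMat (RelD k))) b ⊓ orth (SS B n (k+1))
      obtain ⟨w, hwW, hw0, a, ha⟩ := exists_eig (W := W) hsym' (by
        intro s hs
        refine ⟨?_, orth_invariant hsym' (fun t ht => ?_) hs.2⟩
        · have h := Module.End.mem_eigenspace_iff.1 hs.1
          rw [Matrix.mulVecLin_apply] at h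
          apply Module.End.mem_eigenspace_iff.2
          rw [Matrix.mulVecLin_apply, Matrix.mulVec_mulVec, mat_DD_comm halt hnd hk2,
            ← Matrix.mulVec_mulVec, h, Matrix.mulVec_smul]
        · rw [D_SS halt hnd hdim hk2 ht]
          exact Submodule.smul_mem _ _ ht) (w := v2)
          ⟨Module.End.mem_eigenspace_iff.2 e2, hv2⟩ hv20
      have hbw := Module.End.mem_eigenspace_iff.1 hwW.1
      rw [Matrix.mulVecLin_apply] at hbw
      have h3 := rank_two_bound (β := (Fintype.card F : ℝ) ^ (2 * m)) hq1 (mat_T_sq hk2)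
        (mat_TDT halt hnd hk2) hw0 ha hbw (ih (by omega) hw0 hwW.2 ha) (by
          intro u c hu hc
          have := eig_row_bound (relD_card halt hnd hdim hk2) hu hc
          rw [← pow_succ', show 2 * m + 1 = 2 * (n - (k + 1)) - 1 by omega]
          exact this)
      rw [← pow_add] at h3
      rw [show 2 * (m + 1) = 2 + 2 * m by ring]
      exact h3
    · rw [D_low halt hnd hdim hk1 h1 hv1 hv1k e1]
      exact pow_le_pow_right₀ hq1.le (by omega)

theorem A_bound (halt : IsAltForm B) (hnd : NondegForm B) (hdim : finrank F V = 2 * n) (m : ℕ) :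
    ∀ {k : ℕ}, k + m = n → ∀ {v : SFlag B (Finset.Icc 1 n) → ℝ}, v ≠ 0 →
    v ∈ orth (SS B n k) → ∀ {μ : ℝ}, (relMat (RelA k)).mulVec v = μ • v →
    |μ| ≤ (Fintype.card F : ℝ) ^ (m * (m - 1)) := by
  have hq1 := one_lt_q (F := F)
  induction m with
  | zero =>
    intro k hk v hv hvo μ hμ
    exact absurd (orth_top_zero (by omega) hvo) hv
  | succ m ih =>
    intro k hk v hv hvo μ hμ
    have hk1 : k + 1 ≤ n := by omega
    have hsym := mat_A_symm (n := n) halt hnd k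
    have hsymD := mat_D_symm (n := n) halt hnd hk1
    have hAeq := mat_A_eq (n := n) halt hnd hk1
    have hcomm := mat_DA_comm (n := n) halt hnd hk1
    have hAS : ∀ s ∈ SS B n (k+1), (relMat (RelA k)).mulVec s =
        ((Fintype.card F : ℝ) ^ (m ^ 2)) • (relMat (RelD k)).mulVec s := by
      intro s hs
      rw [← hAeq, ← Matrix.mulVec_mulVec, A_SS halt hnd hdim m (by omega) hs, Matrix.mulVec_smul]
    have hinvD : ∀ s ∈ SS B n (k+1), (relMat (RelD k)).mulVec s ∈ SS B n (k+1) :=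
      fun s hs => D_mem halt hnd hk1 hs
    have hinv : ∀ s ∈ SS B n (k+1), (relMat (RelA k)).mulVec s ∈ SS B n (k+1) := by
      intro s hs
      rw [hAS s hs]
      exact Submodule.smul_mem _ _ (hinvD s hs)
    obtain ⟨v1, hv1, v2, hv2, rfl⟩ := orth_decomp (SS B n (k+1)) v
    have hv2k := orth_anti (SS_mono (B := B) (n := n) (by omega : k ≤ k + 1)) hv2
    have hv1k : v1 ∈ orth (SS B n k) := by
      have := (orth (SS B n k)).sub_mem hvo hv2k
      rwa [add_sub_cancel_right] at this
    obtain ⟨e1, e2⟩ := eig_split hsym hinv hv1 hv2 hμ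
    by_cases h1 : v1 = 0
    · have hv20 : v2 ≠ 0 := by
        rintro rfl
        exact hv (by rw [h1, add_zero])
      let W : Submodule ℝ (SFlag B (Finset.Icc 1 n) → ℝ) :=
        Module.End.eigenspace (Matrix.mulVecLin (relMat (RelA k))) μ ⊓ orth (SS B n (k+1))
      obtain ⟨w, hwW, hw0, b, hb⟩ := exists_eig (W := W) hsymD (by
        intro s hs
        refine ⟨?_, orth_invariant hsymD hinvD hs.2⟩
        · have h := Module.End.mem_eigenspace_iff.1 hs.1
          rw [Matrix.mulVecLin_apply] at h
          apply Module.End.mem_eigenspace_iff.2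
          rw [Matrix.mulVecLin_apply, Matrix.mulVec_mulVec, ← hAeq, Matrix.mul_assoc, ← hcomm, hAeq,
            ← Matrix.mulVec_mulVec, h, Matrix.mulVec_smul]) (w := v2)
          ⟨Module.End.mem_eigenspace_iff.2 e2, hv2⟩ hv20
      have hμw := Module.End.mem_eigenspace_iff.1 hwW.1
      rw [Matrix.mulVecLin_apply] at hμw
      have hbb := D_bound halt hnd hdim m (by omega) hw0
        (orth_anti (SS_mono (B := B) (n := n) (by omega : k ≤ k + 1)) hwW.2) hb
      rw [← hAeq, hcomm, ← Matrix.mulVec_mulVec, hb, Matrix.mulVec_smul] at hμw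
      by_cases hb0 : b = 0
      · rw [hb0, zero_smul] at hμw
        have : μ = 0 := (smul_eq_zero.1 hμw.symm).resolve_right hw0
        rw [this, abs_zero]
        positivity
      · have h3 : (relMat (RelA (k+1))).mulVec w = (μ / b) • w := by
          rw [div_eq_inv_mul, ← smul_smul, ← hμw, smul_smul, inv_mul_cancel₀ hb0, one_smul]
        have h4 := ih (by omega) hw0 hwW.2 h3
        have h5 : |μ| = |μ / b| * |b| := by
          rw [← abs_mul, div_mul_cancel₀ _ hb0]
        rw [h5]
        refine (mul_le_mul h4 hbb (abs_nonneg b) (by positivity)).trans (le_of_eq ?_)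
        rw [← pow_add]
        congr 1
        cases m with
        | zero => rfl
        | succ m => simp only [Nat.add_sub_cancel]; ring
    · have hQ : (Fintype.card F : ℝ) ^ (m ^ 2) ≠ 0 := by positivity
      rw [hAS v1 hv1] at e1
      have h3 : (relMat (RelD k)).mulVec v1 = (μ / (Fintype.card F : ℝ) ^ (m ^ 2)) • v1 := by
        rw [div_eq_inv_mul, ← smul_smul, ← e1, smul_smul, inv_mul_cancel₀ hQ, one_smul]
      have h4 := D_low halt hnd hdim hk1 h1 hv1 hv1k h3
      rw [abs_div, abs_of_pos (by positivity : (0:ℝ) < (Fintype.card F : ℝ) ^ (m ^ 2)),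
        div_eq_iff hQ, ← pow_add] at h4
      rw [h4]
      apply le_of_eq
      congr 1
      rw [show n - k - 1 = m by omega, Nat.add_sub_cancel]
      ring

theorem flagOpp_eq : (FlagOpp : SFlag B (Finset.Icc 1 n) → SFlag B (Finset.Icc 1 n) → Prop) = 
    RelA 0 := by
  funext C C'
  apply propext
  constructor
  · intro h
    refine ⟨fun i hi => ?_, fun i h1 h2 => ?_⟩
    · obtain rfl : i = 0 := by omega
      rw [ch_zero, ch_zero]
    · rw [h i (by simp; omega)]
      exact bot_le
  · intro h i hi
    simp only [Finset.mem_Icc] at hi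
    have := h.2 i (by omega) hi.2
    rwa [ch_zero, le_bot_iff] at this

theorem keyProp_chamber (halt : IsAltForm B) (hnd : NondegForm B) (hdim : finrank F V = 2 * n) :
    KeyProp B n (Finset.Icc 1 n) := by
  have hq1 := one_lt_q (F := F)
  have hc : ∀ f ∈ SS B n 0, (relMat (RelA 0)).mulVec f = ((Fintype.card F : ℝ) ^ (n ^ 2)) • f :=
    fun f hf => A_SS halt hnd hdim n (by omega) hf
  refine ⟨(Fintype.card F : ℝ) ^ (n ^ 2), by positivity, ?_, ?_⟩
  · intro E
    have h := congrFun (hc (fun _ => 1) (fun _ _ _ => rfl)) E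
    rw [relMat_mulVec, ← flagOpp_eq] at h
    simpa using h
  · intro v μ hv h
    rw [flagOpp_eq] at h
    obtain ⟨v1, hv1, v2, hv2, rfl⟩ := orth_decomp (SS B n 0) v
    obtain ⟨e1, e2⟩ := eig_split (mat_A_symm (n := n) halt hnd 0) (fun s hs => by
      rw [hc s hs]; exact Submodule.smul_mem _ _ hs) hv1 hv2 h
    by_cases h1 : v1 = 0
    · have hv20 : v2 ≠ 0 := by
        rintro rfl
        exact hv (by rw [h1, add_zero])
      have h3 := A_bound halt hnd hdim n (by omega) hv20 hv2 e2
      have h4 : (Fintype.card F : ℝ) ^ (n ^ 2) = 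
          (Fintype.card F : ℝ) ^ (n * (n - 1)) * (Fintype.card F : ℝ) ^ n := by
        rw [← pow_add]
        congr 1
        cases n with
        | zero => rfl
        | succ n => simp only [Nat.add_sub_cancel]; ring
      rw [h4, ← neg_mul]
      exact mul_le_mul_of_nonneg_right (neg_le_of_abs_le h3) (by positivity)
    · rw [hc v1 hv1] at e1
      have : (Fintype.card F : ℝ) ^ (n ^ 2) = μ := smul_left_injective ℝ h1 e1
      rw [← this]
      have : (0:ℝ) ≤ (Fintype.card F : ℝ) ^ (n ^ 2) * (Fintype.card F : ℝ) ^ n := by positivity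
      have h2 : (0:ℝ) ≤ (Fintype.card F : ℝ) ^ (n ^ 2) := by positivity
      linarith

end ChBound


section Descent

theorem graph_descent {X Y : Type} [Fintype X] [Fintype Y] {r : X → X → Prop} {s : Y → Y → Prop}
    {π : X → Y} {m Q k : ℝ} (hm : 0 < m) (hπ : Function.Surjective π)
    (h1 : ∀ E E', r E E' → s (π E) (π E'))
    (h2 : ∀ E G, s (π E) G → ((Finset.univ.filter fun E' => r E E' ∧ π E' = G).card : ℝ) = m)
    (hreg : ∀ E, ((Finset.univ.filter (r E)).card : ℝ) = k)
    (hev : ∀ (v : X → ℝ) (μ : ℝ), v ≠ 0 → (relMat r).mulVec v = μ • v → -k ≤ μ * Q) :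
    (∀ E, ((Finset.univ.filter (s E)).card : ℝ) = k / m) ∧
    ∀ (v : Y → ℝ) (μ : ℝ), v ≠ 0 → (relMat s).mulVec v = μ • v → -(k / m) ≤ μ * Q := by
  have key : ∀ (v : Y → ℝ) (E : X), ∑ E' ∈ Finset.univ.filter (r E), v (π E') =
      m * ∑ G ∈ Finset.univ.filter (s (π E)), v G := by
    intro v E
    rw [← Finset.sum_fiberwise_of_maps_to (t := Finset.univ.filter (s (π E))) (g := π)
      (fun E' hE' => by
        simp only [Finset.mem_filter, Finset.mem_univ, true_and] at hE' ⊢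
        exact h1 E E' hE'), Finset.mul_sum]
    apply Finset.sum_congr rfl
    intro G hG
    simp only [Finset.mem_filter, Finset.mem_univ, true_and] at hG
    rw [Finset.filter_filter, ← h2 E G hG, ← nsmul_eq_mul, ← Finset.sum_const]
    apply Finset.sum_congr rfl
    intro E' hE'
    simp only [Finset.mem_filter, Finset.mem_univ, true_and] at hE'
    rw [hE'.2]
  constructor
  · intro G
    obtain ⟨E, rfl⟩ := hπ G
    have := key (fun _ => 1) E
    rw [Finset.sum_const, Finset.sum_const, nsmul_eq_mul, nsmul_eq_mul, mul_one, mul_one,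
      hreg E] at this
    rw [this]
    field_simp
  · intro v μ hv h
    have h3 := hev (v ∘ π) (m * μ) (by
      intro h0
      apply hv
      funext G
      obtain ⟨E, rfl⟩ := hπ G
      exact congrFun h0 E) (by
      funext E
      have h4 := congrFun h (π E)
      rw [relMat_mulVec] at h4 ⊢
      simp only [Function.comp_apply, Pi.smul_apply, smul_eq_mul] at h4 ⊢
      rw [key, h4]
      ring)
    have h5 : -(k / m) = (-k) / m := by ring
    rw [h5, div_le_iff₀ hm]
    linarith

variable {F V : Type} [Field F] [AddCommGroup V] [Module F V]
variable {B : V →ₗ[F] V →ₗ[F] F} {n : ℕ} {J : Finset ℕ}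

/-- Restriction of a flag of type `insert i J` to type `J`. -/
noncomputable def restr {i : ℕ} (E : SFlag B (insert i J)) : SFlag B J where
  space := fun j => if j ∈ J then E.space j else ⊥
  isotropic := by
    intro j hj
    rw [if_pos hj]
    exact E.isotropic j (Finset.mem_insert_of_mem hj)
  finrank_eq := by
    intro j hj
    rw [if_pos hj]
    exact E.finrank_eq j (Finset.mem_insert_of_mem hj)
  mono := by
    intro j hj l hl h
    rw [if_pos hj, if_pos hl]
    exact E.mono j (Finset.mem_insert_of_mem hj) l (Finset.mem_insert_of_mem hl) h
  eq_bot := by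
    intro j hj
    rw [if_neg hj]

theorem restr_space {i : ℕ} (E : SFlag B (insert i J)) {j : ℕ} (hj : j ∈ J) :
    (restr E).space j = E.space j := if_pos hj

theorem flagOpp_insert {i : ℕ} (E E' : SFlag B (insert i J)) :
    FlagOpp E E' ↔ FlagOpp (restr E) (restr E') ∧ bperp B (E.space i) ⊓ E'.space i = ⊥ := by
  constructor
  · intro h
    refine ⟨fun j hj => ?_, h i (Finset.mem_insert_self i J)⟩
    rw [restr_space E hj, restr_space E' hj]
    exact h j (Finset.mem_insert_of_mem hj)
  · rintro ⟨h1, h2⟩ j hj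
    rcases Finset.mem_insert.1 hj with rfl | hj
    · exact h2
    · have := h1 j hj
      rwa [restr_space E hj, restr_space E' hj] at this

theorem fl_iso (Fl : SFlag B J) (j : ℕ) : Fl.space j ≤ bperp B (Fl.space j) := by
  by_cases h : j ∈ J
  · exact isTotIso_iff.1 (Fl.isotropic j h)
  · rw [Fl.eq_bot j h]; exact bot_le

theorem fl_rank_low (hJ : J ⊆ Finset.Icc 1 n) {t : ℕ} (hlow : ∀ j, 1 ≤ j → j ≤ t → j ∈ J)
    (Fl : SFlag B J) : finrank F (Fl.space t) = t := by
  rcases Nat.eq_zero_or_pos t with rfl | h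
  · rw [Fl.eq_bot 0 (fun h => by have := hJ h; simp at this), finrank_bot]
  · exact Fl.finrank_eq t (hlow t h le_rfl)

theorem fl_mono_low (hJ : J ⊆ Finset.Icc 1 n) {t : ℕ} (hlow : ∀ j, 1 ≤ j → j ≤ t → j ∈ J)
    (Fl : SFlag B J) {j : ℕ} (hj : j ∈ J) (hjt : j ≤ t) : Fl.space j ≤ Fl.space t := by
  have h1 := hJ hj
  simp only [Finset.mem_Icc] at h1
  exact Fl.mono j hj t (hlow t (by omega) le_rfl) hjt

theorem fl_mono_low2 (hJ : J ⊆ Finset.Icc 1 n) {t : ℕ} (hlow : ∀ j, 1 ≤ j → j ≤ t → j ∈ J)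
    (Fl : SFlag B J) {j : ℕ} (hj : j ∈ J) (hjt : t ≤ j) : Fl.space t ≤ Fl.space j := by
  rcases Nat.eq_zero_or_pos t with rfl | h
  · rw [Fl.eq_bot 0 (fun h => by have := hJ h; simp at this)]; exact bot_le
  · exact Fl.mono t (hlow t h le_rfl) j hj hjt

theorem exists_insert (halt : IsAltForm B) [FiniteDimensional F V] (hJ : J ⊆ Finset.Icc 1 n) {t : ℕ}
    (hlow : ∀ j, 1 ≤ j → j ≤ t → j ∈ J) (htJ : t + 1 ∉ J) (Fl : SFlag B J) {p : Submodule F V}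
    (h1 : Fl.space t ≤ p) (h2 : p ≤ bperp B (Fl.space t)) (h3 : finrank F p = t + 1)
    (h4 : ∀ j ∈ J, t + 1 ≤ j → p ≤ Fl.space j) :
    ∃ E : SFlag B (insert (t+1) J), restr E = Fl ∧ E.space (t+1) = p := by
  let S : ℕ → Submodule F V := fun j => if j = t + 1 then p else Fl.space j
  have S1 : S (t+1) = p := if_pos rfl
  have S2 : ∀ j, j ≠ t + 1 → S j = Fl.space j := fun j hj => if_neg hj
  have S3 : ∀ j ∈ J, S j = Fl.space j := fun j hj => S2 j fun h => htJ (h ▸ hj)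
  refine ⟨⟨S, ?_, ?_, ?_, ?_⟩, ?_, S1⟩
  · intro j hj
    rcases Finset.mem_insert.1 hj with rfl | hj
    · rw [S1, isTotIso_iff]
      exact iso_ext halt (fl_iso Fl t) h1 h2 (by rw [h3, fl_rank_low hJ hlow])
    · rw [S3 j hj]; exact Fl.isotropic j hj
  · intro j hj
    rcases Finset.mem_insert.1 hj with rfl | hj
    · rw [S1, h3]
    · rw [S3 j hj]; exact Fl.finrank_eq j hj
  · intro j hj l hl hjl
    rcases Finset.mem_insert.1 hj with rfl | hj
    · rcases Finset.mem_insert.1 hl with rfl | hl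
      · exact le_rfl
      · rw [S1, S3 l hl]; exact h4 l hl hjl
    · rcases Finset.mem_insert.1 hl with rfl | hl
      · rw [S1, S3 j hj]
        have : j ≠ t + 1 := fun h => htJ (h ▸ hj)
        exact (fl_mono_low hJ hlow Fl hj (by omega)).trans h1
      · rw [S3 j hj, S3 l hl]; exact Fl.mono j hj l hl hjl
  · intro j hj
    rw [Finset.mem_insert, not_or] at hj
    rw [S2 j hj.1]
    exact Fl.eq_bot j hj.2
  · apply SFlag.ext_space
    intro j hj
    rw [restr_space _ hj]
    exact S3 j hj

variable [FiniteDimensional F V]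

theorem flagOpp_symm (halt : IsAltForm B) (hnd : NondegForm B) {C C' : SFlag B J}
    (h : FlagOpp C C') : FlagOpp C' C := by
  intro i hi
  rw [← le_bot_iff]
  apply bperp_inf_symm halt hnd (X := C.space i) (Y := C'.space i)
  · rw [C.finrank_eq i hi, C'.finrank_eq i hi]
  · exact bot_le
  · exact bot_le
  · exact (h i hi).le

theorem opp_low (halt : IsAltForm B) (hnd : NondegForm B) (hJ : J ⊆ Finset.Icc 1 n) {t : ℕ}
    (hlow : ∀ j, 1 ≤ j → j ≤ t → j ∈ J) 
    {E : SFlag B (insert (t+1) J)} {Fl : SFlag B J} (h : FlagOpp (restr E) Fl) :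
    Fl.space t ⊓ bperp B (E.space t) = ⊥ ∧ E.space t ≤ E.space (t+1) := by
  rcases Nat.eq_zero_or_pos t with rfl | ht
  · have h0 : 0 ∉ J := fun h => by have := hJ h; simp at this
    rw [Fl.eq_bot 0 h0, bot_inf_eq, E.eq_bot 0 (by simp [h0])]
    exact ⟨rfl, bot_le⟩
  · have htJ := hlow t ht le_rfl
    have := h t htJ
    rw [restr_space E htJ] at this
    rw [inf_comm]
    exact ⟨this, E.mono t (Finset.mem_insert_of_mem htJ) _ (Finset.mem_insert_self _ _) (by omega)⟩

theorem exists_W (halt : IsAltForm B) (hnd : NondegForm B) (hdim : finrank F V = 2 * n)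
    (hJ : J ⊆ Finset.Icc 1 n) {t : ℕ} (ht : t + 1 ≤ n)
    (hlow : ∀ j, 1 ≤ j → j ≤ t → j ∈ J) (htJ : t + 1 ∉ J) :
    ∃ w : ℕ, t + 1 ≤ w ∧ ∀ Fl : SFlag B J, ∃ W : Submodule F V, finrank F W = w ∧
      Fl.space t ≤ W ∧ W ≤ bperp B (Fl.space t) ∧
      (∀ p : Submodule F V, p ≤ W → ∀ j ∈ J, t + 1 ≤ j → p ≤ Fl.space j) ∧
      (∀ E : SFlag B (insert (t+1) J), restr E = Fl → E.space (t+1) ≤ W) ∧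
      ∀ E : SFlag B (insert (t+1) J), FlagOpp (restr E) Fl → bperp B W ⊓ E.space (t+1) = ⊥ := by
  by_cases hb : ∃ b, b ∈ J ∧ t + 1 ≤ b
  · obtain ⟨hbJ, hbt⟩ := Nat.find_spec hb
    have hmin : ∀ j ∈ J, t + 1 ≤ j → Nat.find hb ≤ j := fun j h1 h2 => Nat.find_min' hb ⟨h1, h2⟩
    generalize Nat.find hb = b at hbJ hbt hmin
    refine ⟨b, hbt, fun Fl => ⟨Fl.space b, Fl.finrank_eq b hbJ, ?_, ?_, ?_, ?_, ?_⟩⟩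
    · exact fl_mono_low2 hJ hlow Fl hbJ (by omega)
    · exact (fl_iso Fl b).trans (bperp_anti B (fl_mono_low2 hJ hlow Fl hbJ (by omega)))
    · intro p hp j hj hjt
      exact hp.trans (Fl.mono b hbJ j hj (hmin j hj hjt))
    · rintro E rfl
      rw [restr_space E hbJ]
      exact E.mono _ (Finset.mem_insert_self _ _) b (Finset.mem_insert_of_mem hbJ) hbt
    · intro E h
      have h1 := flagOpp_symm halt hnd h b hbJ
      rw [restr_space E hbJ] at h1
      rw [← le_bot_iff, ← h1]
      exact inf_le_inf le_rfl
        (E.mono _ (Finset.mem_insert_self _ _) b (Finset.mem_insert_of_mem hbJ) hbt)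
  · push Not at hb
    refine ⟨2 * n - t, by omega, fun Fl => ⟨bperp B (Fl.space t), ?_, ?_, le_rfl, ?_, ?_, ?_⟩⟩
    · have := finrank_bperp halt hnd (Fl.space t)
      rw [fl_rank_low hJ hlow] at this
      omega
    · exact fl_iso Fl t
    · intro p _ j hj hjt
      have := hb j hj
      omega
    · rintro E rfl
      apply (le_bperp_comm halt).1
      refine le_trans ?_ (fl_iso E (t+1))
      rcases Nat.eq_zero_or_pos t with rfl | h
      · rw [(restr E).eq_bot 0 (fun h => by have := hJ h; simp at this)]; exact bot_le
      · have htm := hlow t h le_rfl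
        rw [restr_space E htm]
        exact E.mono t (Finset.mem_insert_of_mem htm) _ (Finset.mem_insert_self _ _) (by omega)
    · intro E h
      obtain ⟨h1, h2⟩ := opp_low halt hnd hJ hlow h
      rw [bperp_bperp halt hnd, ← le_bot_iff, ← h1]
      exact inf_le_inf le_rfl ((fl_iso E (t+1)).trans (bperp_anti B h2))

theorem restr_surj (halt : IsAltForm B) (hnd : NondegForm B) (hdim : finrank F V = 2 * n)
    (hJ : J ⊆ Finset.Icc 1 n) {t : ℕ} (ht : t + 1 ≤ n)
    (hlow : ∀ j, 1 ≤ j → j ≤ t → j ∈ J) (htJ : t + 1 ∉ J) :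
    Function.Surjective (restr : SFlag B (insert (t+1) J) → SFlag B J) := by
  intro Fl
  obtain ⟨w, hw, hW⟩ := exists_W halt hnd hdim hJ ht hlow htJ
  obtain ⟨W, hWr, h1, h2, h3, -, -⟩ := hW Fl
  have hU := fl_rank_low hJ hlow Fl
  have hne : ¬ W ≤ Fl.space t := fun h => by
    have := Submodule.finrank_mono h
    omega
  obtain ⟨x, hxW, hxU⟩ := SetLike.not_le_iff_exists.1 hne
  have hpW : Fl.space t ⊔ F ∙ x ≤ W :=
    sup_le h1 ((Submodule.span_singleton_le_iff_mem _ _).2 hxW)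
  obtain ⟨E, hE, -⟩ := exists_insert halt hJ hlow htJ Fl (p := Fl.space t ⊔ F ∙ x) le_sup_left
    (hpW.trans h2) (by rw [Submodule.finrank_sup_span_singleton hxU, hU]) (h3 _ hpW)
  exact ⟨E, hE⟩

theorem card_ext [Fintype F] (halt : IsAltForm B) (hnd : NondegForm B)
    (hdim : finrank F V = 2 * n) {t : ℕ} [Fintype (SFlag B (insert (t+1) J))]
    (hJ : J ⊆ Finset.Icc 1 n) (ht : t + 1 ≤ n)
    (hlow : ∀ j, 1 ≤ j → j ≤ t → j ∈ J) (htJ : t + 1 ∉ J) :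
    ∃ d : ℕ, ∀ (E : SFlag B (insert (t+1) J)) (Fl : SFlag B J), FlagOpp (restr E) Fl →
      (Finset.univ.filter fun E' => FlagOpp E E' ∧ restr E' = Fl).card = Fintype.card F ^ d := by
  obtain ⟨w, hw, hW⟩ := exists_W halt hnd hdim hJ ht hlow htJ
  refine ⟨w - (t + 1), fun E Fl hop => ?_⟩
  obtain ⟨W, hWr, h1, h2, h3, h4, h5⟩ := hW Fl
  have h5 := h5 E hop
  have hU := fl_rank_low hJ hlow Fl
  obtain ⟨h6, h7⟩ := opp_low halt hnd hJ hlow hop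
  have hEr : finrank F (E.space (t+1)) = t + 1 := E.finrank_eq _ (Finset.mem_insert_self _ _)
  have h8 : Fl.space t ⊓ bperp B (E.space (t+1)) = ⊥ := by
    rw [← le_bot_iff, ← h6]
    exact inf_le_inf le_rfl (bperp_anti B h7)
  obtain ⟨H, hH⟩ : ∃ H, H = Fl.space t ⊔ (bperp B (E.space (t+1)) ⊓ W) := ⟨_, rfl⟩
  have hUH : Fl.space t ≤ H := by rw [hH]; exact le_sup_left
  have hHW : H ≤ W := by rw [hH]; exact sup_le h1 inf_le_right
  have hHr : finrank F H + 1 = w := by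
    have e1 := finrank_bperp_inf halt hnd (E.space (t+1)) W
    rw [h5, finrank_bot, hEr, hWr] at e1
    have e2 := Submodule.finrank_sup_add_finrank_inf_eq (Fl.space t)
      (bperp B (E.space (t+1)) ⊓ W)
    rw [← inf_assoc, h8, bot_inf_eq, finrank_bot, ← hH, hU] at e2
    omega
  have hcond : ∀ p : Submodule F V, Fl.space t ≤ p → p ≤ W → finrank F p = t + 1 →
      (bperp B (E.space (t+1)) ⊓ p = ⊥ ↔ ¬ p ≤ H) := by
    intro p hp1 hp2 hp3
    constructor
    · intro h h'
      have e : p ≤ Fl.space t := by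
        have e1 : p ≤ (Fl.space t ⊔ (bperp B (E.space (t+1)) ⊓ W)) ⊓ p := le_inf (hH ▸ h') le_rfl
        rw [sup_inf_assoc_of_le _ hp1] at e1
        refine e1.trans (sup_le le_rfl ?_)
        rw [inf_assoc, inf_comm W p, ← inf_assoc, h, bot_inf_eq]
        exact bot_le
      have := Submodule.finrank_mono e
      omega
    · intro h
      have e := cover_inf hp1 (by rw [hp3, hU]) hUH h
      rw [← le_bot_iff, ← h8]
      refine le_inf ?_ inf_le_left
      rw [← e]
      refine le_inf inf_le_right ?_
      rw [hH]
      exact le_trans (le_inf inf_le_left (inf_le_right.trans hp2)) le_sup_right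
  rw [← card_covers_one hUH hHW (d := w - (t+1)) (by rw [hU]; omega) (by omega)]
  refine Finset.card_bij (fun E' _ => E'.space (t+1)) ?_ ?_ ?_
  · intro E' hE'
    simp only [Finset.mem_filter, Finset.mem_univ, true_and] at hE'
    have hr : finrank F (E'.space (t+1)) = t + 1 := E'.finrank_eq _ (Finset.mem_insert_self _ _)
    have hle : Fl.space t ≤ E'.space (t+1) := by
      rw [← hE'.2]
      rcases Nat.eq_zero_or_pos t with h | h
      · rw [(restr E').eq_bot t (fun h => by have := hJ h; simp at this; omega)]; exact bot_le
      · have htm := hlow t h le_rfl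
        rw [restr_space E' htm]
        exact E'.mono t (Finset.mem_insert_of_mem htm) _ (Finset.mem_insert_self _ _) (by omega)
    rw [mem_covers]
    refine ⟨hle, h4 E' hE'.2, by rw [hr, hU], ?_⟩
    exact (hcond _ hle (h4 E' hE'.2) hr).1 ((flagOpp_insert E E').1 hE'.1).2
  · intro E1 hE1 E2 hE2 h
    simp only [Finset.mem_filter, Finset.mem_univ, true_and] at hE1 hE2
    apply SFlag.ext_space
    intro j hj
    rcases Finset.mem_insert.1 hj with rfl | hj
    · exact h
    · rw [← restr_space E1 hj, ← restr_space E2 hj, hE1.2, hE2.2]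
  · intro p hp
    rw [mem_covers, hU] at hp
    obtain ⟨E', hE', hEp⟩ := exists_insert halt hJ hlow htJ Fl hp.1 (hp.2.1.trans h2) hp.2.2.1
      (h3 p hp.2.1)
    refine ⟨E', ?_, hEp⟩
    simp only [Finset.mem_filter, Finset.mem_univ, true_and]
    refine ⟨(flagOpp_insert E E').2 ⟨by rw [hE']; exact hop, ?_⟩, hE'⟩
    rw [hEp]
    exact (hcond p hp.1 hp.2.1 hp.2.2.1).2 hp.2.2.2

theorem sflag_finite [Fintype F] (J : Finset ℕ) : Finite (SFlag B J) := by
  have hV := finite_V F V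
  let f : SFlag B J → (J → Submodule F V) := fun C j => C.space j.1
  have : Function.Injective f := by
    intro C C' h
    apply SFlag.ext_space
    intro i hi
    exact congrFun h ⟨i, hi⟩
  exact Finite.of_injective f this

theorem keyProp_all [Fintype F] (halt : IsAltForm B) (hnd : NondegForm B)
    (hdim : finrank F V = 2 * n) (c : ℕ) :
    ∀ (J : Finset ℕ) [Fintype (SFlag B J)], J ⊆ Finset.Icc 1 n → (Finset.Icc 1 n \ J).card = c →
    KeyProp B n J := by
  induction c with
  | zero =>
    intro J _ hJ hc
    have : J = Finset.Icc 1 n := by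
      apply le_antisymm hJ
      rw [Finset.card_eq_zero, Finset.sdiff_eq_empty_iff_subset] at hc
      exact hc
    subst this
    exact keyProp_chamber halt hnd hdim
  | succ c ih =>
    intro J _ hJ hc
    have hex : ∃ i, i ∈ Finset.Icc 1 n \ J := by
      rw [← Finset.Nonempty, ← Finset.card_pos]
      omega
    obtain ⟨i, hi, hmin⟩ : ∃ i, i ∈ Finset.Icc 1 n \ J ∧ ∀ j, j < i → j ∉ Finset.Icc 1 n \ J :=
      ⟨Nat.find hex, Nat.find_spec hex, fun j hj => Nat.find_min hex hj⟩
    have hi' := hi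
    simp only [Finset.mem_sdiff, Finset.mem_Icc] at hi hmin
    obtain ⟨t, rfl⟩ : ∃ t, i = t + 1 := ⟨i - 1, by omega⟩
    have hlow : ∀ j, 1 ≤ j → j ≤ t → j ∈ J := by
      intro j h1 h2
      by_contra h
      exact hmin j (by omega) ⟨⟨h1, by omega⟩, h⟩
    have := sflag_finite (B := B) (insert (t+1) J)
    let _ : Fintype (SFlag B (insert (t+1) J)) := Fintype.ofFinite _
    have hsub : insert (t+1) J ⊆ Finset.Icc 1 n :=
      Finset.insert_subset (by simp; omega) hJ
    have hcard : (Finset.Icc 1 n \ insert (t+1) J).card = c := by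
      rw [Finset.sdiff_insert, Finset.card_erase_of_mem hi', hc]
      rfl
    obtain ⟨k, hk0, hk1, hk2⟩ := ih (insert (t+1) J) hsub hcard
    obtain ⟨d, hd⟩ := card_ext halt hnd hdim hJ hi.1.2 hlow hi.2
    have hq1 := one_lt_q (F := F)
    have hm : (0:ℝ) < (Fintype.card F : ℝ) ^ d := by positivity
    obtain ⟨r1, r2⟩ := graph_descent (m := (Fintype.card F : ℝ) ^ d) hm
      (restr_surj halt hnd hdim hJ hi.1.2 hlow hi.2)
      (fun E E' h => ((flagOpp_insert E E').1 h).1) (fun E G h => by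
        rw [hd E G h]; push_cast; rfl) hk1 hk2
    exact ⟨k / (Fintype.card F : ℝ) ^ d, by positivity, r1, r2⟩

end Descent


section Hoffman

theorem psd_of_min {X : Type} [Fintype X] {A : Matrix X X ℝ} (hA : A.transpose = A) {lam : ℝ}
    (hmin : ∀ mu : ℝ, (∃ x : X → ℝ, x ≠ 0 ∧ A.mulVec x = mu • x) → lam ≤ mu) :
    (A - lam • (1 : Matrix X X ℝ)).PosSemidef := by
  have hH : (A - lam • (1 : Matrix X X ℝ)).IsHermitian := by
    rw [Matrix.IsHermitian, Matrix.conjTranspose_eq_transpose_of_trivial, Matrix.transpose_sub,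
      Matrix.transpose_smul, Matrix.transpose_one, hA]
  rw [hH.posSemidef_iff_eigenvalues_nonneg]
  intro i
  have h1 := hH.mulVec_eigenvectorBasis i
  have h2 := hmin (lam + hH.eigenvalues i) ⟨(hH.eigenvectorBasis i).ofLp, ?_, ?_⟩
  · simp only [Pi.zero_apply]
    linarith
  · intro h
    have h3 := hH.eigenvectorBasis.orthonormal.ne_zero i
    apply h3
    exact (WithLp.linearEquiv 2 ℝ (X → ℝ)).map_eq_zero_iff.1 h
  · rw [Matrix.sub_mulVec, Matrix.smul_mulVec, Matrix.one_mulVec, sub_eq_iff_eq_add] at h1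
    rw [h1, add_smul, add_comm]

theorem hoffman {X : Type} [Fintype X] {A : Matrix X X ℝ} (hA : A.transpose = A) {lam k Q : ℝ}
    (hmin : ∀ mu : ℝ, (∃ x : X → ℝ, x ≠ 0 ∧ A.mulVec x = mu • x) → lam ≤ mu)
    (hreg : A.mulVec (fun _ => 1) = fun _ => k) (hlow : -k ≤ lam * Q) (hQ : 0 < Q)
    {x : X → ℝ} (hx2 : x ⬝ᵥ x = ∑ a, x a) (hxA : x ⬝ᵥ A.mulVec x = 0)
    (hs : ∑ a, x a = (Fintype.card X : ℝ) / (Q + 1)) (a : X) :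
    A.mulVec x a = lam * x a - lam := by
  have hpsd := psd_of_min hA hmin
  obtain ⟨s, hsdef⟩ : ∃ s, s = ∑ a, x a := ⟨_, rfl⟩
  rw [← hsdef] at hx2 hs
  have hN : (0:ℝ) < Fintype.card X := by
    have : 0 < Fintype.card X := Fintype.card_pos_iff.2 ⟨a⟩
    exact_mod_cast this
  have hspos : 0 < s := by rw [hs]; positivity
  have hN' : (Fintype.card X : ℝ) = s * (Q + 1) := by rw [hs]; field_simp
  obtain ⟨o, ho⟩ : ∃ o : X → ℝ, o = fun _ => 1 := ⟨_, rfl⟩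
  have hAo : A.mulVec o = k • o := by
    rw [ho, hreg]; funext; simp
  have hox : o ⬝ᵥ x = s := by rw [hsdef, ho]; simp [dotProduct]
  have hxo : x ⬝ᵥ o = s := by rw [dotProduct_comm, hox]
  have hoo : o ⬝ᵥ o = s * (Q + 1) := by rw [← hN', ho]; simp [dotProduct]
  have hoAx : o ⬝ᵥ A.mulVec x = k * s := by
    rw [← mulVec_dot hA, hAo, smul_dotProduct, hox, smul_eq_mul]
  obtain ⟨c, hc⟩ : ∃ c, c = 1 / (Q + 1) := ⟨_, rfl⟩
  have hcQ : c * (Q + 1) = 1 := by rw [hc]; field_simp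
  have hcpos : 0 < c := by rw [hc]; positivity
  have hMv : ∀ y : X → ℝ, (A - lam • (1 : Matrix X X ℝ)).mulVec y = A.mulVec y - lam • y := by
    intro y
    rw [Matrix.sub_mulVec, Matrix.smul_mulVec, Matrix.one_mulVec]
  have hval : (x - c • o) ⬝ᵥ (A - lam • (1 : Matrix X X ℝ)).mulVec (x - c • o)
      = -(s * (c * k + lam * (1 - c))) := by
    rw [hMv, Matrix.mulVec_sub, Matrix.mulVec_smul, hAo]
    simp only [sub_dotProduct, dotProduct_sub, smul_dotProduct, dotProduct_smul, smul_eq_mul, hxA,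
      hxo, hox, hoo, hx2, hoAx]
    linear_combination (s * k * c - lam * s * c) * hcQ
  have hck : c * k + lam * (1 - c) = c * (k + lam * Q) := by
    linear_combination (-lam) * hcQ
  have h0 : 0 ≤ (x - c • o) ⬝ᵥ (A - lam • (1 : Matrix X X ℝ)).mulVec (x - c • o) := by
    have := hpsd.dotProduct_mulVec_nonneg (x - c • o)
    simpa using this
  have hnn : 0 ≤ s * (c * (k + lam * Q)) := by
    have : 0 ≤ k + lam * Q := by linarith
    positivity
  rw [hval, hck] at h0
  have hz : s * (c * (k + lam * Q)) = 0 := by linarith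
  have hkl : k + lam * Q = 0 := by
    rcases mul_eq_zero.1 hz with h | h
    · exact absurd h hspos.ne'
    · exact (mul_eq_zero.1 h).resolve_left hcpos.ne'
  have hzero : (A - lam • (1 : Matrix X X ℝ)).mulVec (x - c • o) = 0 := by
    rw [← hpsd.dotProduct_mulVec_zero_iff, star_trivial, hval, hck, hz, neg_zero]
  rw [hMv, Matrix.mulVec_sub, Matrix.mulVec_smul, hAo] at hzero
  have h2 := congrFun hzero a
  rw [ho] at h2
  simp only [Pi.sub_apply, Pi.smul_apply, smul_eq_mul, Pi.zero_apply, mul_one] at h2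
  linear_combination h2 - lam * hcQ + c * hkl

end Hoffman

theorem stmt_11 {F V : Type} [Field F] [Fintype F] [AddCommGroup V] [Module F V]
    [FiniteDimensional F V] (n q : ℕ) (hn : 3 ≤ n) (hq : Fintype.card F = q)
    (B : V →ₗ[F] V →ₗ[F] F) (halt : IsAltForm B) (hnd : NondegForm B)
    (hdim : Module.finrank F V = 2 * n)
    (J : Finset ℕ) (hJ : J ⊆ Finset.Icc 1 n) (hJne : J.Nonempty)
    [Fintype (SFlag B J)] [DecidableEq (SFlag B J)]
    (A : Matrix (SFlag B J) (SFlag B J) ℝ)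
    (hA : ∀ C C' : SFlag B J, A C C' = if FlagOpp C C' then 1 else 0)
    (lam : ℝ)
    (hlam : ∃ x : SFlag B J → ℝ, x ≠ 0 ∧ A.mulVec x = lam • x)
    (hmin : ∀ mu : ℝ, (∃ x : SFlag B J → ℝ, x ≠ 0 ∧ A.mulVec x = mu • x) → lam ≤ mu)
    (𝓕 : Set (SFlag B J)) (hEKR : IsEKRFlags 𝓕)
    (hsharp : (𝓕.ncard : ℝ) = (Nat.card (SFlag B J) : ℝ) / ((q : ℝ) ^ n + 1)) :
    ∀ Fl : SFlag B J,
      (-lam) * (if Fl ∈ 𝓕 then 1 else 0) + ({G ∈ 𝓕 | FlagOpp G Fl}.ncard : ℝ) =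
        -lam := by
  intro Fl
  subst hq
  have hAr : A = relMat FlagOpp := by
    ext C C'
    rw [hA, relMat_apply]
  subst hAr
  obtain ⟨k, hk0, hk1, hk2⟩ := keyProp_all halt hnd hdim _ J hJ rfl
  obtain ⟨x0, hx0, hx0e⟩ := hlam
  have hq1 := one_lt_q (F := F)
  have hsum : ∑ a, (if a ∈ 𝓕 then (1:ℝ) else 0) = (𝓕.ncard : ℝ) := by
    rw [Finset.sum_ite, Finset.sum_const, Finset.sum_const_zero, add_zero, nsmul_eq_mul, mul_one,
      Set.ncard_eq_toFinset_card']
    congr 2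
    ext a
    simp
  have h := hoffman (relMat_transpose fun _ _ h => flagOpp_symm halt hnd h) hmin (k := k) (by
      funext E
      rw [relMat_mulVec, Finset.sum_const, nsmul_eq_mul, mul_one, hk1 E]) (hk2 x0 lam hx0 hx0e)
    (by positivity) (x := fun a => if a ∈ 𝓕 then 1 else 0) (by
      rw [dotProduct]
      apply Finset.sum_congr rfl
      intro a _
      split_ifs <;> simp) (by
      rw [dotProduct]
      apply Finset.sum_eq_zero
      intro a _
      rw [relMat_mulVec]
      by_cases ha : a ∈ 𝓕
      · rw [if_pos ha, one_mul]
        apply Finset.sum_eq_zero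
        intro b hb
        simp only [Finset.mem_filter, Finset.mem_univ, true_and] at hb
        exact if_neg fun hbF => hEKR a ha b hbF hb
      · rw [if_neg ha, zero_mul]) (by rw [hsum, hsharp, Nat.card_eq_fintype_card]) Fl
  have hcount : ({G ∈ 𝓕 | FlagOpp G Fl}.ncard : ℝ) =
      (relMat FlagOpp).mulVec (fun a => if a ∈ 𝓕 then (1:ℝ) else 0) Fl := by
    rw [relMat_mulVec, Finset.sum_ite, Finset.sum_const, Finset.sum_const_zero, add_zero,
      nsmul_eq_mul, mul_one, Set.ncard_eq_toFinset_card']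
    congr 2
    ext a
    simp only [Set.mem_toFinset, Set.mem_setOf_eq, Finset.mem_filter, Finset.mem_univ, true_and]
    exact ⟨fun h => ⟨flagOpp_symm halt hnd h.2, h.1⟩, fun h => ⟨h.2, flagOpp_symm halt hnd h.1⟩⟩
  rw [hcount, h]
  ring
end

section
/- Let F be a flag of type {t₁, t₂, …, t_f} with t₁ < t₂ < ⋯ < t_f in the symplectic polar space of rank n. Then the number of chambers C with C_{t_i} = F_{t_i} for all i = 1, …, f equals ( ∏_{j=1}^{n−t_f} (q^j + 1) ) · z_{t₁} · z_{n−t_f} · ∏_{i=2}^{f} z_{t_i − t_{i−1}}, where z_k = ∏_{i=1}^{k} (q^i − 1)/(q − 1). -/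
open scoped Classical

open Module

section Aux

variable {F V : Type} [Field F] [AddCommGroup V] [Module F V]

theorem aux_card_sdiff [Fintype F] [FiniteDimensional F V] (W U : Submodule F V) (h : W ≤ U) :
    Nat.card {v : V // v ∈ U ∧ v ∉ W} + Fintype.card F ^ finrank F W
      = Fintype.card F ^ finrank F U := by
  haveI : Finite V := Module.finite_of_finite F
  have h1 : Nat.card U = Fintype.card F ^ finrank F U := by
    rw [Module.natCard_eq_pow_finrank (K := F), Nat.card_eq_fintype_card]
  have h2 : Nat.card W = Fintype.card F ^ finrank F W := by
    rw [Module.natCard_eq_pow_finrank (K := F), Nat.card_eq_fintype_card]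
  rw [← h1, ← h2]
  have e1 : Nat.card {v : V // v ∈ U ∧ v ∉ W} = ((U : Set V) \ (W : Set V)).ncard := rfl
  have e2 : Nat.card W = (W : Set V).ncard := rfl
  have e3 : Nat.card U = (U : Set V).ncard := rfl
  rw [e1, e2, e3]
  exact Set.ncard_sdiff_add_ncard_of_subset h (Set.toFinite _)

theorem aux_finrank_sup_span [FiniteDimensional F V] (W : Submodule F V) (v : V) (hv : v ∉ W) :
    finrank F (W ⊔ Submodule.span F {v} : Submodule F V) = finrank F W + 1 := by
  have h0 : v ≠ 0 := fun h => hv (h ▸ W.zero_mem)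
  have h := Submodule.finrank_sup_add_finrank_inf_eq W (Submodule.span F {v})
  have h2 : W ⊓ Submodule.span F {v} = ⊥ := by
    rw [← disjoint_iff]
    exact ((Submodule.disjoint_span_singleton' h0).2 hv)
  rw [h2, finrank_bot, finrank_span_singleton h0] at h
  omega

theorem aux_eq_sup_span [FiniteDimensional F V] (W W' : Submodule F V) (h : W ≤ W')
    (hr : finrank F W' = finrank F W + 1) (v : V) (hv : v ∈ W') (hvW : v ∉ W) :
    W ⊔ Submodule.span F {v} = W' := by
  apply Submodule.eq_of_le_of_finrank_eq
  · exact sup_le h ((Submodule.span_singleton_le_iff_mem v W').2 hv)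
  · rw [aux_finrank_sup_span W v hvW, hr]

/-- Count of one-step extensions of `W` inside `U`. -/
theorem aux_count [Fintype F] [FiniteDimensional F V] (W U : Submodule F V) (h : W ≤ U)
    (a : ℕ) (ha : finrank F U = finrank F W + a) :
    (Nat.card {W' : Submodule F V // W ≤ W' ∧ W' ≤ U ∧ finrank F W' = finrank F W + 1} : ℝ)
      = ((Fintype.card F : ℝ) ^ a - 1) / ((Fintype.card F : ℝ) - 1) := by
  haveI : Finite V := Module.finite_of_finite F
  set q := Fintype.card F with hq
  have hq1 : 1 < q := Fintype.one_lt_card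
  let X := {W' : Submodule F V // W ≤ W' ∧ W' ≤ U ∧ finrank F W' = finrank F W + 1}
  haveI : Finite X := inferInstance
  let e : {v : V // v ∈ U ∧ v ∉ W} ≃ Σ x : X, {v : V // v ∈ x.1 ∧ v ∉ W} :=
    { toFun := fun v => ⟨⟨W ⊔ Submodule.span F {v.1}, le_sup_left,
          sup_le h ((Submodule.span_singleton_le_iff_mem _ U).2 v.2.1),
          aux_finrank_sup_span W v.1 v.2.2⟩, ⟨v.1,
            (le_sup_right : _ ≤ W ⊔ _) (Submodule.mem_span_singleton_self v.1), v.2.2⟩⟩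
      invFun := fun p => ⟨p.2.1, p.1.2.2.1 p.2.2.1, p.2.2.2⟩
      left_inv := fun v => rfl
      right_inv := by
        rintro ⟨⟨W', h1, h2, h3⟩, v, hv, hvW⟩
        obtain rfl := aux_eq_sup_span W W' h1 h3 v hv hvW
        rfl }
  have hc : Nat.card {v : V // v ∈ U ∧ v ∉ W} = Nat.card X * (q ^ (finrank F W + 1) - q ^ finrank F W) := by
    haveI := Fintype.ofFinite X
    rw [Nat.card_congr e, Nat.card_sigma]
    rw [Finset.sum_congr rfl (g := fun _ => q ^ (finrank F W + 1) - q ^ finrank F W)]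
    · simp [Nat.card_eq_fintype_card]
    · intro x _
      have := aux_card_sdiff W x.1 x.2.1
      rw [x.2.2.2, ← hq] at this
      omega
  have hU := aux_card_sdiff W U h
  rw [hc, ha, ← hq] at hU
  have hle : q ^ finrank F W ≤ q ^ (finrank F W + 1) := Nat.pow_le_pow_right (by omega) (by omega)
  have hU' : (Nat.card X : ℝ) * ((q:ℝ) ^ (finrank F W + 1) - (q:ℝ) ^ finrank F W) + (q:ℝ) ^ finrank F W
      = (q:ℝ) ^ (finrank F W + a) := by
    have h' : ((q ^ (finrank F W + a) : ℕ) : ℝ) = (q:ℝ) ^ (finrank F W + a) := by push_cast; rfl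
    rw [← h', ← hU]; push_cast [Nat.cast_sub hle]; rfl
  have hq1' : (1:ℝ) < q := by exact_mod_cast hq1
  have hp : (0:ℝ) < (q:ℝ) ^ finrank F W := by positivity
  rw [eq_div_iff (by linarith)]
  apply mul_left_cancel₀ hp.ne'
  rw [pow_add, pow_add] at hU'
  change (q:ℝ) ^ finrank F W * ((Nat.card X : ℝ) * _) = _
  linear_combination hU'

theorem aux_mem_bperp (B : V →ₗ[F] V →ₗ[F] F) (W : Submodule F V) (v : V) :
    v ∈ bperp B W ↔ ∀ w ∈ W, B w v = 0 := by
  simp [bperp, Submodule.mem_iInf]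

theorem aux_swap (B : V →ₗ[F] V →ₗ[F] F) (halt : IsAltForm B) (u v : V) (h : B u v = 0) :
    B v u = 0 := by
  have h1 := halt (u + v)
  have h2 := halt u
  have h3 := halt v
  simp only [map_add, LinearMap.add_apply, h2, h3, h] at h1
  simpa using h1

theorem aux_finrank_bperp [FiniteDimensional F V] (B : V →ₗ[F] V →ₗ[F] F) (halt : IsAltForm B)
    (hnd : NondegForm B) (W : Submodule F V) :
    finrank F W + finrank F (bperp B W) = finrank F V := by
  have hb : bperp B W = LinearMap.BilinForm.orthogonal B W := by
    ext v
    rw [aux_mem_bperp, LinearMap.BilinForm.mem_orthogonal_iff]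
  have hr : LinearMap.BilinForm.IsRefl B := fun u v h => aux_swap B halt u v h
  have hn : LinearMap.BilinForm.Nondegenerate B := by
    exact ⟨fun v hv => hnd v hv, fun v hv => hnd v fun w => aux_swap B halt _ _ (hv w)⟩
  have := LinearMap.BilinForm.finrank_orthogonal hn W
  have h2 := Submodule.finrank_le W
  rw [hb, this]; omega

theorem aux_iso_iff [FiniteDimensional F V] (B : V →ₗ[F] V →ₗ[F] F) (halt : IsAltForm B)
    (W W' : Submodule F V) (h : W ≤ W') (hW : IsTotIso B W)
    (hr : finrank F W' = finrank F W + 1) : IsTotIso B W' ↔ W' ≤ bperp B W := by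
  constructor
  · intro hi v hv
    rw [aux_mem_bperp]
    exact fun w hw => hi w (h hw) v hv
  · intro hp
    obtain ⟨v, hv, hvW⟩ : ∃ v ∈ W', v ∉ W := by
      by_contra! hcon
      have : W = W' := le_antisymm h hcon
      rw [this] at hr; omega
    have hs := aux_eq_sup_span W W' h hr v hv hvW
    have hv2 := hp hv
    rw [aux_mem_bperp] at hv2
    intro x hx y hy
    rw [← hs, Submodule.mem_sup] at hx hy
    obtain ⟨w, hw, z, hz, rfl⟩ := hx
    obtain ⟨w', hw', z', hz', rfl⟩ := hy
    obtain ⟨c, rfl⟩ := Submodule.mem_span_singleton.1 hz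
    obtain ⟨c', rfl⟩ := Submodule.mem_span_singleton.1 hz'
    simp [hW w hw w' hw', hv2 w hw, aux_swap B halt _ _ (hv2 w' hw'), halt v]

/-- Partial chambers up to level `m`, compatible with the flag `G`. -/
structure PCh (B : V →ₗ[F] V →ₗ[F] F) {f : ℕ} (t : Fin (f + 1) → ℕ)
    (G : Fin (f + 1) → Submodule F V) (m : ℕ) (s : ℕ → Submodule F V) : Prop where
  iso : ∀ k ≤ m, IsTotIso B (s k)
  rank : ∀ k ≤ m, finrank F (s k) = k
  mono : ∀ k < m, s k ≤ s (k + 1)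
  bot : ∀ k, m < k → s k = ⊥
  sub : ∀ k ≤ m, ∀ i, k ≤ t i → s k ≤ G i

variable (B : V →ₗ[F] V →ₗ[F] F) {f : ℕ} (t : Fin (f + 1) → ℕ) (G : Fin (f + 1) → Submodule F V)

/-- Possible extensions. -/
def PExt (m : ℕ) (W : Submodule F V) : Type :=
  {W' : Submodule F V // W ≤ W' ∧ finrank F W' = m + 1 ∧ IsTotIso B W' ∧
    ∀ i, m + 1 ≤ t i → W' ≤ G i}

/-- Extending a partial chamber by one level. -/
noncomputable def pchEquiv (m : ℕ) :
    {s // PCh B t G (m + 1) s} ≃ Σ c : {s // PCh B t G m s}, PExt B t G m (c.1 m) where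
  toFun s := ⟨⟨Function.update s.1 (m + 1) ⊥, by
      have hs := s.2
      constructor
      · intro k hk
        rw [Function.update_of_ne (by omega)]
        exact hs.iso k (by omega)
      · intro k hk
        rw [Function.update_of_ne (by omega)]
        exact hs.rank k (by omega)
      · intro k hk
        rw [Function.update_of_ne (by omega), Function.update_of_ne (by omega)]
        exact hs.mono k (by omega)
      · intro k hk
        by_cases h : k = m + 1
        · subst h; simp
        · rw [Function.update_of_ne h]
          exact hs.bot k (by omega)
      · intro k hk
        rw [Function.update_of_ne (by omega)]
        exact hs.sub k (by omega)⟩,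
    ⟨s.1 (m + 1), by
      have hs := s.2
      refine ⟨?_, hs.rank _ le_rfl, hs.iso _ le_rfl, hs.sub _ le_rfl⟩
      simp only
      rw [Function.update_of_ne (by omega)]
      exact hs.mono m (by omega)⟩⟩
  invFun p := ⟨Function.update p.1.1 (m + 1) p.2.1, by
      obtain ⟨⟨s, hs⟩, W', h1, h2, h3, h4⟩ := p
      simp only at h1 ⊢
      constructor
      · intro k hk
        by_cases h : k = m + 1
        · subst h; simpa using h3
        · rw [Function.update_of_ne h]; exact hs.iso k (by omega)
      · intro k hk
        by_cases h : k = m + 1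
        · subst h; rw [Function.update_self]; exact h2
        · rw [Function.update_of_ne h]; exact hs.rank k (by omega)
      · intro k hk
        rw [Function.update_of_ne (by omega)]
        by_cases h : k = m
        · subst h; simpa using h1
        · rw [Function.update_of_ne (by omega)]; exact hs.mono k (by omega)
      · intro k hk
        rw [Function.update_of_ne (by omega)]; exact hs.bot k (by omega)
      · intro k hk
        by_cases h : k = m + 1
        · subst h; simpa using h4
        · rw [Function.update_of_ne h]; exact hs.sub k (by omega)⟩
  left_inv s := by
    apply Subtype.ext
    simp
  right_inv p := by
    obtain ⟨⟨s, hs⟩, W', h1, h2, h3, h4⟩ := p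
    have hb : s (m + 1) = ⊥ := hs.bot _ (by omega)
    have e : Function.update (Function.update s (m + 1) W') (m + 1) ⊥ = s := by
      rw [Function.update_idem, ← hb, Function.update_eq_self]
    have key : ∀ (x y : Σ c : {s // PCh B t G m s}, PExt B t G m (c.1 m)),
        x.1.1 = y.1.1 → x.2.1 = y.2.1 → x = y := by
      rintro ⟨⟨x, hx⟩, X, hX⟩ ⟨⟨y, hy⟩, Y, hY⟩ h1 h2
      simp only at h1 h2
      subst h1
      subst h2
      rfl
    apply key
    · exact e
    · exact Function.update_self _ _ _

theorem pch_step [Fintype F] [FiniteDimensional F V] (m : ℕ) (x : ℝ)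
    (h : ∀ s, PCh B t G m s → (Nat.card (PExt B t G m (s m)) : ℝ) = x) :
    (Nat.card {s // PCh B t G (m + 1) s} : ℝ) = Nat.card {s // PCh B t G m s} * x := by
  haveI : Finite V := Module.finite_of_finite F
  rw [Nat.card_congr (pchEquiv B t G m)]
  by_cases hne : Nonempty {s // PCh B t G m s}
  · obtain ⟨s0, hs0⟩ := hne
    have hN : ∀ c : {s // PCh B t G m s},
        Nat.card (PExt B t G m (c.1 m)) = Nat.card (PExt B t G m (s0 m)) := by
      intro c
      have h1 := h c.1 c.2
      rw [← h s0 hs0] at h1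
      exact_mod_cast h1
    have hfin : ∀ W, Finite (PExt B t G m W) := fun W => by unfold PExt; infer_instance
    let e : (Σ c : {s // PCh B t G m s}, PExt B t G m (c.1 m)) ≃
        {s // PCh B t G m s} × Fin (Nat.card (PExt B t G m (s0 m))) :=
      (Equiv.sigmaCongrRight fun c => Finite.equivFinOfCardEq (hN c)).trans (Equiv.sigmaEquivProd _ _)
    rw [Nat.card_congr e, Nat.card_prod, Nat.card_fin, Nat.cast_mul, h s0 hs0]
  · rw [not_nonempty_iff] at hne
    simp

theorem pch_zero [FiniteDimensional F V] : Nat.card {s // PCh B t G 0 s} = 1 := by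
  rw [Nat.card_eq_one_iff_unique]
  refine ⟨⟨?_⟩, ⟨fun _ => ⊥, ?_⟩⟩
  · rintro ⟨s, hs⟩ ⟨s', hs'⟩
    apply Subtype.ext
    funext k
    rcases Nat.eq_zero_or_pos k with rfl | hk
    · exact (Submodule.finrank_eq_zero.1 (hs.rank 0 le_rfl)).trans
        (Submodule.finrank_eq_zero.1 (hs'.rank 0 le_rfl)).symm
    · exact (hs.bot k hk).trans (hs'.bot k hk).symm
  · constructor
    · intro k _ u hu w _
      rw [Submodule.mem_bot] at hu
      simp [hu]
    · intro k hk
      simp; omega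
    · simp
    · simp
    · simp

theorem pch_step1 [Fintype F] [FiniteDimensional F V]
    (hGiso : ∀ i, IsTotIso B (G i)) (hGrank : ∀ i, finrank F (G i) = t i)
    (hGmono : ∀ i j, i ≤ j → G i ≤ G j) (m : ℕ) (j : Fin (f + 1)) (hj : m + 1 ≤ t j)
    (hmin : ∀ i, m + 1 ≤ t i → j ≤ i) :
    (Nat.card {s // PCh B t G (m + 1) s} : ℝ) = Nat.card {s // PCh B t G m s} *
      (((Fintype.card F : ℝ) ^ (t j - m) - 1) / ((Fintype.card F : ℝ) - 1)) := by
  apply pch_step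
  intro s hs
  have hr := hs.rank m le_rfl
  rw [← aux_count (s m) (G j) (hs.sub m le_rfl j (by omega)) (t j - m)
    (by rw [hr, hGrank]; omega)]
  congr 1
  apply Nat.card_congr
  refine Equiv.subtypeEquivRight fun W' => ?_
  rw [hr]
  constructor
  · rintro ⟨h1, h2, h3, h4⟩
    exact ⟨h1, h4 j hj, h2⟩
  · rintro ⟨h1, h2, h3⟩
    exact ⟨h1, h3, fun u hu w hw => hGiso j u (h2 hu) w (h2 hw),
      fun i hi => h2.trans (hGmono _ _ (hmin i hi))⟩

theorem pch_step2 [Fintype F] [FiniteDimensional F V] (halt : IsAltForm B) (hnd : NondegForm B)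
    (n : ℕ) (hdim : finrank F V = 2 * n) (m : ℕ) (hm : m < n) (hj : ∀ i, t i ≤ m) :
    (Nat.card {s // PCh B t G (m + 1) s} : ℝ) = Nat.card {s // PCh B t G m s} *
      (((Fintype.card F : ℝ) ^ (2 * (n - m)) - 1) / ((Fintype.card F : ℝ) - 1)) := by
  apply pch_step
  intro s hs
  have hr := hs.rank m le_rfl
  have hi := hs.iso m le_rfl
  have hd := aux_finrank_bperp B halt hnd (s m)
  have hle : s m ≤ bperp B (s m) := fun v hv => by
    rw [aux_mem_bperp]; exact fun w hw => hi w hw v hv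
  rw [← aux_count (s m) (bperp B (s m)) hle (2 * (n - m)) (by omega)]
  congr 1
  apply Nat.card_congr
  refine Equiv.subtypeEquivRight fun W' => ?_
  constructor
  · rintro ⟨h1, h2, h3, h4⟩
    exact ⟨h1, (aux_iso_iff B halt _ _ h1 hi (by omega)).1 h3, by omega⟩
  · rintro ⟨h1, h2, h3⟩
    exact ⟨h1, by omega, (aux_iso_iff B halt _ _ h1 hi h3).2 h2,
      fun i hi => absurd (hj i) (by omega)⟩

/-- Generic iteration of a step recursion. -/
theorem aux_iter (A : ℕ → ℝ) (g : ℕ → ℝ) (a b : ℕ) (hab : a ≤ b)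
    (h : ∀ m, a ≤ m → m < b → A (m + 1) = A m * g (b - m)) :
    A b = A a * ∏ i ∈ Finset.Icc 1 (b - a), g i := by
  obtain ⟨d, rfl⟩ := Nat.exists_eq_add_of_le hab
  clear hab
  induction d generalizing a with
  | zero => simp
  | succ d ih =>
    have h1 := ih (a + 1) (fun m h1 h2 => by
      have := h m (by omega) (by omega)
      rwa [show a + (d + 1) = a + 1 + d by omega] at this)
    rw [show a + (d + 1) = a + 1 + d by omega, h1, h a le_rfl (by omega),
      show a + 1 + d - (a + 1) = d by omega, show a + 1 + d - a = d + 1 by omega,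
      Finset.prod_Icc_succ_top (by omega), show a + (d + 1) - a = d + 1 by omega]
    ring

theorem pch_flag [Fintype F] [FiniteDimensional F V] (ht : StrictMono t)
    (hGiso : ∀ i, IsTotIso B (G i)) (hGrank : ∀ i, finrank F (G i) = t i)
    (hGmono : ∀ i j, i ≤ j → G i ≤ G j) :
    (Nat.card {s // PCh B t G (t (Fin.last f)) s} : ℝ) = zpol (Fintype.card F) (t 0) *
      ∏ i : Fin f, zpol (Fintype.card F) (t i.succ - t i.castSucc) := by
  let T : ℕ → ℕ := fun j => if h : j < f + 1 then t ⟨j, h⟩ else 0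
  let A : ℕ → ℝ := fun m => (Nat.card {s // PCh B t G m s} : ℝ)
  have hstep : ∀ a (j : Fin (f + 1)), a ≤ t j → (∀ i, i < j → t i ≤ a) →
      A (t j) = A a * zpol (Fintype.card F) (t j - a) := by
    intro a j haj hi
    unfold zpol
    apply aux_iter A (fun i => ((Fintype.card F : ℝ) ^ i - 1) / ((Fintype.card F : ℝ) - 1)) a (t j) haj
    intro m h1 h2
    apply pch_step1 B t G hGiso hGrank hGmono m j h2
    intro i hmi
    by_contra! hcon
    have := hi i hcon
    omega
  have key : ∀ j : ℕ, j < f + 1 → A (T j) = zpol (Fintype.card F) (t 0) *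
      ∏ i ∈ Finset.range j, zpol (Fintype.card F) (T (i + 1) - T i) := by
    intro j
    induction j with
    | zero =>
      intro _
      have h0 : T 0 = t 0 := by simp [T]
      have hA : A 0 = 1 := by simp [A, pch_zero]
      rw [h0, hstep 0 0 (Nat.zero_le _) (fun i hi => absurd hi (by simp)), hA]
      simp
    | succ j ih =>
      intro hj
      have e1 : T (j + 1) = t ⟨j + 1, hj⟩ := by simp only [T]; rw [dif_pos hj]
      have e2 : T j = t ⟨j, by omega⟩ := by simp only [T]; rw [dif_pos (by omega)]
      rw [Finset.prod_range_succ, ← mul_assoc, ← ih (by omega), e1, e2]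
      apply hstep
      · exact ht.monotone (by simp [Fin.le_def])
      · intro i hi
        apply ht.monotone
        rw [Fin.le_def]
        rw [Fin.lt_def] at hi
        simp at hi ⊢
        omega
  have h := key f (by omega)
  have e1 : T f = t (Fin.last f) := by simp only [T]; rw [dif_pos (by omega)]; rfl
  rw [e1, ← Fin.prod_univ_eq_prod_range (fun i => zpol (Fintype.card F) (T (i + 1) - T i))] at h
  change A _ = _
  rw [h]
  congr 1
  apply Finset.prod_congr rfl
  intro i _
  have e1 : T (i + 1) = t i.succ := by simp only [T]; rw [dif_pos (by omega)]; rfl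
  have e2 : T i = t i.castSucc := by simp only [T]; rw [dif_pos (by omega)]; rfl
  rw [e1, e2]

theorem pch_le {B : V →ₗ[F] V →ₗ[F] F} {t : Fin (f + 1) → ℕ} {G : Fin (f + 1) → Submodule F V}
    {m : ℕ} {s : ℕ → Submodule F V} (hs : PCh B t G m s) (i j : ℕ) (hij : i ≤ j) (hj : j ≤ m) :
    s i ≤ s j := by
  induction j, hij using Nat.le_induction with
  | base => exact le_rfl
  | succ j _ ih => exact (ih (by omega)).trans (hs.mono j (by omega))

/-- Chambers through the flag are the partial chambers of level `n`. -/
noncomputable def chamberEquiv [FiniteDimensional F V] (n : ℕ)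
    (htmem : ∀ i, t i ∈ Finset.Icc 1 n) (hGrank : ∀ i, finrank F (G i) = t i) :
    {C : SFlag B (Finset.Icc 1 n) // ∀ i : Fin (f + 1), SFlag.space C (t i) = G i} ≃
      {s // PCh B t G n s} where
  toFun C := ⟨C.1.space, by
    obtain ⟨C, hC⟩ := C
    have h0 : C.space 0 = ⊥ := C.eq_bot 0 (by simp)
    simp only at hC ⊢
    constructor
    · intro k hk
      rcases Nat.eq_zero_or_pos k with rfl | hk0
      · rw [h0]
        intro u hu w _
        rw [Submodule.mem_bot] at hu
        simp [hu]
      · exact C.isotropic k (Finset.mem_Icc.2 ⟨hk0, hk⟩)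
    · intro k hk
      rcases Nat.eq_zero_or_pos k with rfl | hk0
      · rw [h0]; simp
      · exact C.finrank_eq k (Finset.mem_Icc.2 ⟨hk0, hk⟩)
    · intro k hk
      rcases Nat.eq_zero_or_pos k with rfl | hk0
      · rw [h0]; simp
      · exact C.mono _ (Finset.mem_Icc.2 ⟨hk0, by omega⟩) _
          (Finset.mem_Icc.2 ⟨by omega, by omega⟩) (by omega)
    · intro k hk
      exact C.eq_bot k (by simp; omega)
    · intro k hk i hi
      rcases Nat.eq_zero_or_pos k with rfl | hk0
      · rw [h0]; simp
      · rw [← hC i]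
        exact C.mono _ (Finset.mem_Icc.2 ⟨hk0, by omega⟩) _ (htmem i) hi⟩
  invFun s := ⟨⟨s.1, fun i hi => s.2.iso i (Finset.mem_Icc.1 hi).2,
      fun i hi => s.2.rank i (Finset.mem_Icc.1 hi).2,
      fun i _ j hj hij => pch_le s.2 i j hij (Finset.mem_Icc.1 hj).2,
      fun i hi => by
        rcases Nat.eq_zero_or_pos i with rfl | h0
        · exact Submodule.finrank_eq_zero.1 (s.2.rank 0 (Nat.zero_le _))
        · exact s.2.bot i (by rw [Finset.mem_Icc] at hi; omega)⟩, fun i => by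
      have hi := (Finset.mem_Icc.1 (htmem i)).2
      apply Submodule.eq_of_le_of_finrank_eq (s.2.sub _ hi i le_rfl)
      rw [hGrank]
      exact s.2.rank _ hi⟩
  left_inv C := rfl
  right_inv s := rfl

end Aux

/-- the number of chambers containing a fixed flag of type
`{t₀ < t₁ < ⋯ < t_f}`. -/
theorem stmt_15 {F V : Type} [Field F] [Fintype F] [AddCommGroup V] [Module F V]
    [FiniteDimensional F V] (n q f : ℕ) (hn : 3 ≤ n) (hq : Fintype.card F = q)
    (B : V →ₗ[F] V →ₗ[F] F) (halt : IsAltForm B) (hnd : NondegForm B)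
    (hdim : Module.finrank F V = 2 * n)
    (t : Fin (f + 1) → ℕ) (ht : StrictMono t) (htmem : ∀ i, t i ∈ Finset.Icc 1 n)
    (G : Fin (f + 1) → Submodule F V)
    (hGiso : ∀ i, IsTotIso B (G i))
    (hGrank : ∀ i, Module.finrank F (G i) = t i)
    (hGmono : ∀ i j, i ≤ j → G i ≤ G j) :
    (Nat.card {C : SFlag B (Finset.Icc 1 n) //
        ∀ i : Fin (f + 1), SFlag.space C (t i) = G i} : ℝ) =
      (∏ j ∈ Finset.Icc 1 (n - t (Fin.last f)), ((q : ℝ) ^ j + 1)) *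
        zpol q (t 0) * zpol q (n - t (Fin.last f)) *
        ∏ i : Fin f, zpol q (t i.succ - t i.castSucc) := by
  rw [Nat.card_congr (chamberEquiv B t G n htmem hGrank)]
  subst hq
  have hl := (Finset.mem_Icc.1 (htmem (Fin.last f))).2
  have h := aux_iter (fun m => (Nat.card {s // PCh B t G m s} : ℝ))
    (fun i => ((Fintype.card F : ℝ) ^ (2 * i) - 1) / ((Fintype.card F : ℝ) - 1))
    (t (Fin.last f)) n hl (fun m h1 h2 => pch_step2 B t G halt hnd n hdim m h2
      (fun i => (ht.monotone (Fin.le_last i)).trans h1))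
  have hz : ∀ k, ∏ i ∈ Finset.Icc 1 k,
      ((Fintype.card F : ℝ) ^ (2 * i) - 1) / ((Fintype.card F : ℝ) - 1) =
      (∏ j ∈ Finset.Icc 1 k, ((Fintype.card F : ℝ) ^ j + 1)) * zpol (Fintype.card F) k := by
    intro k
    unfold zpol
    rw [← Finset.prod_mul_distrib]
    apply Finset.prod_congr rfl
    intro i _
    ring
  rw [h, hz, pch_flag B t G ht hGiso hGrank hGmono]
  ring
end
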